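/- arXiv:1407.6448 — 4 statements merged into one kernel-verified Lean document; each statement's English description precedes it below -/
import Mathlib

section
/- Assume conditions (A), (C), (S), (S*)₂ and (K*). Then there exist constants C > 0 and c > 0 such that for every r ≥ 0, every ω ∈ S^{n−1}, and every differentiable function û : [0,∞) → ℂᵐ satisfying A⁰û′(t) + i r A(ω) û(t) + L û(t) = 0 for all t ≥ 0 and the initial constraint i r Q(ω)û(0) + R û(0) = 0, one has |û(t)| ≤ C e^{−c ρ(r) t} |û(0)| for all t ≥ 0, where ρ(r) = r²/(1 + r²). -/
open Matrix BigOperators Finset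

noncomputable section

/-- Complexification of a real matrix. -/
def cmap {a b : ℕ} (X : Matrix (Fin a) (Fin b) ℝ) : Matrix (Fin a) (Fin b) ℂ :=
  X.map (fun x => (x : ℂ))

/-- Real part of the standard Hermitian inner product `⟨x, y⟩ = ∑ xᵢ conj yᵢ` on `ℂᵐ`. -/
def reIP {m : ℕ} (x y : Fin m → ℂ) : ℝ := (∑ i, x i * (starRingEnd ℂ) (y i)).re

/-- Symmetric part `X₁ = (X + Xᵀ)/2` of a real square matrix. -/
def symP {m : ℕ} (X : Matrix (Fin m) (Fin m) ℝ) : Matrix (Fin m) (Fin m) ℝ :=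
  (2⁻¹ : ℝ) • (X + Xᵀ)

/-- Skew-symmetric part `X₂ = (X − Xᵀ)/2` of a real square matrix. -/
def skewP {m : ℕ} (X : Matrix (Fin m) (Fin m) ℝ) : Matrix (Fin m) (Fin m) ℝ :=
  (2⁻¹ : ℝ) • (X - Xᵀ)

/-- Kernel of (the complexification of) a real matrix, as a subset of `ℂᵐ`. -/
def kerC {m : ℕ} (L : Matrix (Fin m) (Fin m) ℝ) : Set (Fin m → ℂ) :=
  {z | (cmap L).mulVec z = 0}

/-- Euclidean norm on `ℂᵐ`. -/
def cnrm {m : ℕ} (z : Fin m → ℂ) : ℝ := Real.sqrt (∑ i, Complex.normSq (z i))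

/-!
Condition (C) makes `i r Q(ω)û + R û` constant along solutions, so the constraint propagates from
the initial time. Put `τ = r / (1 + r²)`. For a large `M` and a small `α`, the multiplier
`X = M + S − i α τ K(ω)` makes `⟨X A⁰û, û⟩` a functional equivalent to `|û|²`, whose dissipation
along the flow is `Re⟨X (i r A(ω) + L)û, û⟩`. The constraint enters twice: `R û = −i r Π₁Q(ω)û`,
so (S*)₂ gives the term `i r S A(ω)` a sign, and for `r ≠ 0` it puts `û` in `X_ω`. Since
`K(ω)A(ω)` is positive on `X_ω ∩ Ker L` and `S L + L` vanishes only on `Ker L`, compactness of the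
unit spheres makes `K(ω)A(ω) + N (S L + L)` coercive on `X_ω`, uniformly in `ω`, for some `N`. Hence
the dissipation dominates `r τ |û|² = ρ(r) |û|²`.
-/

open Complex ContinuousLinearMap
open scoped InnerProductSpace

section Compactness

theorem exists_pos_forall_le_add_mul_of_isCompact {X : Type*} [TopologicalSpace X]
    {s : Set X} (hs : IsCompact s) {f g : X → ℝ} (hf : Continuous f)
    (hg : Continuous g) (hg0 : ∀ x ∈ s, 0 ≤ g x) (hfg : ∀ x ∈ s, g x = 0 → 0 < f x) :
    ∃ N : ℝ, 0 ≤ N ∧ ∃ δ > 0, ∀ x ∈ s, δ ≤ f x + N * g x := by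
  have hcompact : IsCompact (s ∩ {x | f x ≤ 0}) :=
    hs.inter_right (isClosed_le hf continuous_const)
  obtain ⟨β, hβ, hβg⟩ := hcompact.exists_forall_le' hg.continuousOn (a := 0) fun x hx =>
    (hg0 x hx.1).lt_of_ne' fun h => (hfg x hx.1 h).not_ge hx.2
  obtain ⟨B, hB⟩ := hs.exists_bound_of_continuousOn hf.continuousOn
  have hpos : ∀ x ∈ s, 0 < f x + (|B| + 1) / β * g x := by
    intro x hx
    rcases le_or_gt (f x) 0 with hfx | hfx
    · have hbound : |f x| ≤ |B| := (hB x hx).trans (le_abs_self B)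
      have hpenalty : |B| + 1 ≤ (|B| + 1) / β * g x := by
        rw [div_mul_eq_mul_div, le_div_iff₀ hβ]
        exact mul_le_mul_of_nonneg_left (hβg x ⟨hx, hfx⟩) (by positivity)
      linarith [neg_abs_le (f x)]
    · have := hg0 x hx
      positivity
  obtain ⟨δ, hδ, hle⟩ := hs.exists_forall_le'
    (hf.add (continuous_const.mul hg)).continuousOn hpos
  exact ⟨_, by positivity, δ, hδ, hle⟩

variable {𝕜 E F Ω : Type*} [RCLike 𝕜] [NormedAddCommGroup E] [InnerProductSpace 𝕜 E]
  [FiniteDimensional 𝕜 E] [NormedAddCommGroup F] [NormedSpace 𝕜 F]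
  [TopologicalSpace Ω] [CompactSpace Ω]

theorem exists_coercive_of_pos_on_ker {D : Ω → E →L[𝕜] F} {G : Ω → E →L[𝕜] E} {B : E →L[𝕜] E}
    (hD : Continuous D) (hG : Continuous G) (hB : ∀ z, 0 ≤ B.reApplyInnerSelf z)
    (hpos : ∀ ω z, D ω z = 0 → B.reApplyInnerSelf z = 0 → z ≠ 0 → 0 < (G ω).reApplyInnerSelf z) :
    ∃ N : ℝ, 0 ≤ N ∧ ∃ δ > 0, ∀ ω z, D ω z = 0 →
      δ * ‖z‖ ^ 2 ≤ (G ω).reApplyInnerSelf z + N * B.reApplyInnerSelf z := by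
  have : ProperSpace E := FiniteDimensional.proper_rclike 𝕜 E
  have hGcont : Continuous fun p : Ω × E => (G p.1).reApplyInnerSelf p.2 :=
    RCLike.continuous_re.comp
      (((hG.comp continuous_fst).clm_apply continuous_snd).inner continuous_snd)
  have hcompact : IsCompact ((Set.univ ×ˢ Metric.sphere (0 : E) 1) ∩ {p : Ω × E | D p.1 p.2 = 0}) :=
    (isCompact_univ.prod (isCompact_sphere 0 1)).inter_right
      (isClosed_eq ((hD.comp continuous_fst).clm_apply continuous_snd) continuous_const)
  obtain ⟨N, hN, δ, hδ, hle⟩ := exists_pos_forall_le_add_mul_of_isCompact hcompact hGcont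
    (B.reApplyInnerSelf_continuous.comp continuous_snd) (fun p _ => hB p.2)
    fun p hp hBp => hpos p.1 p.2 hp.2 hBp (ne_zero_of_mem_unit_sphere ⟨p.2, hp.1.2⟩)
  refine ⟨N, hN, δ, hδ, fun ω z hz => ?_⟩
  rcases eq_or_ne z 0 with rfl | hz0
  · simp [reApplyInnerSelf_apply]
  have hnorm : 0 < ‖z‖ := norm_pos_iff.2 hz0
  have hunit := hle (ω, ((‖z‖⁻¹ : ℝ) : 𝕜) • z)
    ⟨⟨Set.mem_univ _, by simp [norm_smul, hnorm.ne']⟩, by simp [hz]⟩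
  simp only [Function.comp_apply, reApplyInnerSelf_smul, RCLike.norm_ofReal, sq_abs] at hunit
  calc δ * ‖z‖ ^ 2
      ≤ (‖z‖⁻¹ ^ 2 * (G ω).reApplyInnerSelf z + N * (‖z‖⁻¹ ^ 2 * B.reApplyInnerSelf z))
          * ‖z‖ ^ 2 := by gcongr
    _ = (G ω).reApplyInnerSelf z + N * B.reApplyInnerSelf z := by field_simp

theorem exists_pos_forall_mul_norm_sq_le {T : E →L[𝕜] E}
    (hT : ∀ z, z ≠ 0 → 0 < T.reApplyInnerSelf z) :
    ∃ a > 0, ∀ z, a * ‖z‖ ^ 2 ≤ T.reApplyInnerSelf z := by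
  obtain ⟨N, -, a, ha, hle⟩ := exists_coercive_of_pos_on_ker (Ω := Unit)
    (D := fun _ => (0 : E →L[𝕜] E)) (G := fun _ => T) (B := 0) continuous_const
    continuous_const (by simp [reApplyInnerSelf_apply]) fun _ z _ _ hz => hT z hz
  exact ⟨a, ha, fun z => by simpa [reApplyInnerSelf_apply] using hle () z rfl⟩

end Compactness

theorem exists_comp_eq_of_ker_le_ker {𝕜 V W U : Type*} [DivisionRing 𝕜] [AddCommGroup V]
    [Module 𝕜 V] [AddCommGroup W] [Module 𝕜 W] [AddCommGroup U] [Module 𝕜 U] {f : V →ₗ[𝕜] W}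
    {g : V →ₗ[𝕜] U} (h : LinearMap.ker f ≤ LinearMap.ker g) :
    ∃ k : W →ₗ[𝕜] U, k ∘ₗ f = g := by
  obtain ⟨k, hk⟩ :=
    ((LinearMap.ker f).liftQ g h ∘ₗ f.quotKerEquivRange.symm.toLinearMap).exists_extend
  refine ⟨k, LinearMap.ext fun v => ?_⟩
  have hkv := LinearMap.congr_fun hk ⟨f v, v, rfl⟩
  have hmk : f.quotKerEquivRange.symm ⟨f v, v, rfl⟩ = (LinearMap.ker f).mkQ v :=
    f.quotKerEquivRange_symm_apply_image v _
  simpa [hmk] using hkv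

section Nonnegative

variable {E : Type*} [NormedAddCommGroup E] [InnerProductSpace ℂ E]

theorem exists_eq_adjoint_comp_self_of_isPositive [CompleteSpace E] {T : E →L[ℂ] E}
    (hT : T.IsPositive) : ∃ Y : E →L[ℂ] E, T = adjoint Y ∘L Y :=
  CStarAlgebra.nonneg_iff_eq_star_mul_self.1 ((nonneg_iff_isPositive T).2 hT)

theorem apply_eq_zero_of_reApplyInnerSelf_eq_zero [CompleteSpace E] {T : E →L[ℂ] E}
    (hT : T.IsPositive) {z : E} (hz : T.reApplyInnerSelf z = 0) : T z = 0 := by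
  obtain ⟨Y, rfl⟩ := exists_eq_adjoint_comp_self_of_isPositive hT
  have hYz : ‖Y z‖ ^ 2 = 0 := (Y.apply_norm_sq_eq_inner_adjoint_left z).trans hz
  simp [norm_eq_zero.1 (pow_eq_zero_iff two_ne_zero |>.1 hYz)]

theorem exists_norm_sq_eq_two_mul_reApplyInnerSelf [CompleteSpace E] {T : E →L[ℂ] E}
    (hT : ∀ z, 0 ≤ T.reApplyInnerSelf z) :
    ∃ Y : E →L[ℂ] E, ∀ z, ‖Y z‖ ^ 2 = 2 * T.reApplyInnerSelf z := by
  have hre : ∀ z, (T + adjoint T).reApplyInnerSelf z = 2 * T.reApplyInnerSelf z := fun z => by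
    have hadj : (⟪adjoint T z, z⟫_ℂ).re = (⟪T z, z⟫_ℂ).re := by
      rw [adjoint_inner_left]; exact inner_re_symm (𝕜 := ℂ) _ _
    simp [reApplyInnerSelf_apply, inner_add_left, hadj, two_mul]
  have hpos : (T + adjoint T).IsPositive := isPositive_def'.2
    ⟨by simp [IsSelfAdjoint, star_eq_adjoint, add_comm], fun z => by
      rw [hre]; exact mul_nonneg zero_le_two (hT z)⟩
  obtain ⟨Y, hY⟩ := exists_eq_adjoint_comp_self_of_isPositive hpos
  refine ⟨Y, fun z => ?_⟩
  rw [Y.apply_norm_sq_eq_inner_adjoint_left, ← hY, ← hre]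
  rfl

theorem exists_norm_sq_le_mul_reApplyInnerSelf [FiniteDimensional ℂ E] {F : Type*}
    [NormedAddCommGroup F] [NormedSpace ℂ F] {T : E →L[ℂ] E} {L : E →L[ℂ] F}
    (hT : ∀ z, 0 ≤ T.reApplyInnerSelf z) (hker : ∀ z, T.reApplyInnerSelf z = 0 → L z = 0) :
    ∃ ℓ : ℝ, ∀ z, ‖L z‖ ^ 2 ≤ ℓ * T.reApplyInnerSelf z := by
  have := FiniteDimensional.complete ℂ E
  obtain ⟨Y, hY⟩ := exists_norm_sq_eq_two_mul_reApplyInnerSelf hT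
  have hle : LinearMap.ker Y.toLinearMap ≤ LinearMap.ker L.toLinearMap := fun z hz => by
    have hYz : Y z = 0 := hz
    exact hker z (by simpa [hYz] using hY z)
  obtain ⟨X, hX⟩ := exists_comp_eq_of_ker_le_ker hle
  have hXY : ∀ z, L z = X.toContinuousLinearMap (Y z) := fun z => (LinearMap.congr_fun hX z).symm
  refine ⟨2 * ‖X.toContinuousLinearMap‖ ^ 2, fun z => ?_⟩
  calc ‖L z‖ ^ 2 = ‖X.toContinuousLinearMap (Y z)‖ ^ 2 := by rw [hXY]
    _ ≤ (‖X.toContinuousLinearMap‖ * ‖Y z‖) ^ 2 := by gcongr; exact le_opNorm _ _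
    _ = 2 * ‖X.toContinuousLinearMap‖ ^ 2 * T.reApplyInnerSelf z := by rw [mul_pow, hY]; ring

end Nonnegative

section Energy

theorem le_mul_exp_of_hasDerivWithinAt_le {f f' : ℝ → ℝ} {k : ℝ}
    (hf : ∀ t, 0 ≤ t → HasDerivWithinAt f (f' t) (Set.Ici 0) t)
    (hle : ∀ t, 0 ≤ t → f' t ≤ k * f t) {t : ℝ} (ht : 0 ≤ t) :
    f t ≤ f 0 * Real.exp (k * t) := by
  have hderiv : ∀ s, 0 ≤ s → HasDerivWithinAt (fun s => f s * Real.exp (-(k * s)))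
      ((f' s - k * f s) * Real.exp (-(k * s))) (Set.Ici 0) s := fun s hs =>
    ((hf s hs).mul ((hasDerivAt_id' s).const_mul k).fun_neg.exp.hasDerivWithinAt).congr_deriv
      (by ring)
  have hanti : AntitoneOn (fun s => f s * Real.exp (-(k * s))) (Set.Ici 0) :=
    antitoneOn_of_hasDerivWithinAt_nonpos (convex_Ici 0)
      (fun s hs => (hderiv s hs).continuousWithinAt)
      (fun s hs => (hderiv s (interior_subset hs)).mono interior_subset)
      fun s hs => mul_nonpos_of_nonpos_of_nonneg
        (sub_nonpos.2 (hle s (interior_subset (s := Set.Ici (0 : ℝ)) hs))) (Real.exp_pos _).le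
  have h0t : f t * Real.exp (-(k * t)) ≤ f 0 := by simpa using hanti Set.self_mem_Ici ht ht
  calc f t = f t * Real.exp (-(k * t)) * Real.exp (k * t) := by
        rw [mul_assoc, ← Real.exp_add, neg_add_cancel, Real.exp_zero, mul_one]
    _ ≤ f 0 * Real.exp (k * t) := by gcongr

variable {E F : Type*} [NormedAddCommGroup E] [NormedAddCommGroup F]

theorem apply_eq_apply_zero_of_comp_eq_zero [NormedSpace ℂ E] [NormedSpace ℂ F]
    {A₀ A₀inv G : E →L[ℂ] E} {W : E →L[ℂ] F}
    (hinv : A₀inv * A₀ = 1) (hW : W ∘L A₀inv ∘L G = 0) {u u' : ℝ → E}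
    (hu : ∀ t, 0 ≤ t → HasDerivWithinAt u (u' t) (Set.Ici 0) t)
    (hode : ∀ t, 0 ≤ t → A₀ (u' t) + G (u t) = 0) {t : ℝ} (ht : 0 ≤ t) :
    W (u t) = W (u 0) := by
  have hWu' : ∀ s, 0 ≤ s → W (u' s) = 0 := fun s hs => by
    have h1 : A₀inv (A₀ (u' s)) = u' s := DFunLike.congr_fun hinv (u' s)
    have h2 : W (A₀inv (G (u s))) = 0 := DFunLike.congr_fun hW (u s)
    rw [← h1, eq_neg_of_add_eq_zero_left (hode s hs), map_neg, map_neg, h2, neg_zero]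
  have hderiv : ∀ s, 0 ≤ s → HasDerivWithinAt (fun s => W (u s)) 0 (Set.Ici 0) s := fun s hs =>
    ((W.restrictScalars ℝ).hasFDerivAt.comp_hasDerivWithinAt s (hu s hs)).congr_deriv (hWu' s hs)
  exact constant_of_has_deriv_right_zero
    (fun s hs => (hderiv s hs.1).continuousWithinAt.mono Set.Icc_subset_Ici_self)
    (fun s hs => (hderiv s hs.1).mono (Set.Ici_subset_Ici.2 hs.1)) t ⟨ht, le_rfl⟩

variable [InnerProductSpace ℂ E]

theorem hasDerivWithinAt_reApplyInnerSelf {T : E →L[ℂ] E} (hT : T.IsSymmetric) {u : ℝ → E}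
    {u' : E} {s : Set ℝ} {t : ℝ} (hu : HasDerivWithinAt u u' s t) :
    HasDerivWithinAt (fun t => T.reApplyInnerSelf (u t)) (2 * (⟪T u', u t⟫_ℂ).re) s t := by
  have hTu : HasDerivWithinAt (fun t => T (u t)) (T u') s t :=
    (T.restrictScalars ℝ).hasFDerivAt.comp_hasDerivWithinAt t hu
  have hsymm : (⟪T (u t), u'⟫_ℂ).re = (⟪T u', u t⟫_ℂ).re :=
    (congrArg re (hT _ _)).trans (inner_re_symm (𝕜 := ℂ) _ _)
  refine (reCLM.hasFDerivAt.comp_hasDerivWithinAt t (hTu.inner ℂ hu)).congr_deriv ?_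
  simp [hsymm, two_mul]

theorem norm_le_of_multiplier {A₀ G X : E →L[ℂ] E} {b κ : ℝ} (hb : 0 < b) (hκ : 0 ≤ κ)
    (hsymm : (X * A₀).IsSymmetric) (hlower : ∀ z, ‖z‖ ^ 2 ≤ (X * A₀).reApplyInnerSelf z)
    (hupper : ∀ z, (X * A₀).reApplyInnerSelf z ≤ b * ‖z‖ ^ 2) {u u' : ℝ → E}
    (hu : ∀ t, 0 ≤ t → HasDerivWithinAt u (u' t) (Set.Ici 0) t)
    (hode : ∀ t, 0 ≤ t → A₀ (u' t) + G (u t) = 0)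
    (hdiss : ∀ t, 0 ≤ t → κ * ‖u t‖ ^ 2 ≤ (X * G).reApplyInnerSelf (u t))
    {t : ℝ} (ht : 0 ≤ t) :
    ‖u t‖ ≤ √b * Real.exp (-(κ / b * t)) * ‖u 0‖ := by
  have hXu' : ∀ s, 0 ≤ s → (⟪(X * A₀) (u' s), u s⟫_ℂ).re = -(X * G).reApplyInnerSelf (u s) :=
    fun s hs => by
      simp [reApplyInnerSelf_apply, eq_neg_of_add_eq_zero_left (hode s hs)]
  have hdecay : (X * A₀).reApplyInnerSelf (u t) ≤
      (X * A₀).reApplyInnerSelf (u 0) * Real.exp (-(2 * (κ / b)) * t) := by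
    refine le_mul_exp_of_hasDerivWithinAt_le (f := fun t => (X * A₀).reApplyInnerSelf (u t))
      (fun s hs => hasDerivWithinAt_reApplyInnerSelf hsymm (hu s hs)) (fun s hs => ?_) ht
    have hequiv : κ / b * (X * A₀).reApplyInnerSelf (u s) ≤ κ * ‖u s‖ ^ 2 :=
      calc κ / b * (X * A₀).reApplyInnerSelf (u s) ≤ κ / b * (b * ‖u s‖ ^ 2) := by
            gcongr; exact hupper _
        _ = κ * ‖u s‖ ^ 2 := by field_simp
    linarith [hXu' s hs, hdiss s hs]
  refine (sq_le_sq₀ (norm_nonneg _) (by positivity)).1 ?_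
  calc ‖u t‖ ^ 2 ≤ (X * A₀).reApplyInnerSelf (u 0) * Real.exp (-(2 * (κ / b)) * t) :=
        (hlower _).trans hdecay
    _ ≤ b * ‖u 0‖ ^ 2 * Real.exp (-(2 * (κ / b)) * t) := by gcongr; exact hupper _
    _ = (√b * Real.exp (-(κ / b * t)) * ‖u 0‖) ^ 2 := by
        rw [mul_pow, mul_pow, Real.sq_sqrt hb.le, ← Real.exp_nat_mul]
        ring_nf

end Energy

section Symbol

variable {E F : Type*} [NormedAddCommGroup E] [NormedAddCommGroup F]

/-- The Fourier symbol `i r X + Y` at frequency `r` of a first-order operator with principal part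
`X` and zeroth-order part `Y`. -/
def symbol [NormedSpace ℂ E] [NormedSpace ℂ F] (r : ℝ) (X Y : E →L[ℂ] F) : E →L[ℂ] F :=
  ((r : ℂ) * I) • X + Y

theorem symbol_comp_comp_symbol_eq_zero [NormedSpace ℂ E] [NormedSpace ℂ F]
    {A₀inv A L : E →L[ℂ] E} {Q R : E →L[ℂ] F}
    (hQA : Q ∘L A₀inv ∘L A = 0) (hRL : R ∘L A₀inv ∘L L = 0)
    (hQLRA : Q ∘L A₀inv ∘L L + R ∘L A₀inv ∘L A = 0) (r : ℝ) :
    symbol r Q R ∘L A₀inv ∘L symbol r A L = 0 := by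
  calc symbol r Q R ∘L A₀inv ∘L symbol r A L
      = ((r : ℂ) * I) • ((r : ℂ) * I) • (Q ∘L A₀inv ∘L A)
        + ((r : ℂ) * I) • (Q ∘L A₀inv ∘L L + R ∘L A₀inv ∘L A) + R ∘L A₀inv ∘L L := by
        simp only [symbol, comp_add, add_comp, comp_smul, smul_comp, smul_add]
        abel
    _ = 0 := by simp [hQA, hRL, hQLRA]

theorem symbol_comp_apply_eq_zero [NormedSpace ℂ E] [NormedSpace ℂ F]
    {Q R : E →L[ℂ] F} {P : F →L[ℂ] F} (hPR : P ∘L R = R) {r : ℝ} {z : E}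
    (hz : symbol r Q R z = 0) : symbol r (P ∘L Q) R z = 0 := by
  have hPRz : P (R z) = R z := DFunLike.congr_fun hPR z
  simpa [symbol, hPRz] using congrArg P hz

theorem sub_comp_apply_eq_zero_of_symbol_apply_eq_zero [NormedSpace ℂ E] [NormedSpace ℂ F]
    {Q R : E →L[ℂ] F} {P : F →L[ℂ] F} (hPR : P ∘L R = R) {r : ℝ} (hr : r ≠ 0) {z : E}
    (hz : symbol r Q R z = 0) : (Q - P ∘L Q) z = 0 := by
  have hPz : ((r : ℂ) * I) • P (Q z) + R z = 0 := symbol_comp_apply_eq_zero hPR hz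
  have hz' : ((r : ℂ) * I) • Q z + R z = 0 := hz
  have hdiff : ((r : ℂ) * I) • (Q - P ∘L Q) z = 0 := by
    simpa [smul_sub, sub_eq_zero] using add_right_cancel (hz'.trans hPz.symm)
  simpa [hr] using hdiff

theorem mul_reApplyInnerSelf_nonneg_of_symbol_apply_eq_zero [InnerProductSpace ℂ E]
    [InnerProductSpace ℂ F] {T : E →L[ℂ] E} {Q R : E →L[ℂ] F} {P St : F →L[ℂ] F}
    (hPR : P ∘L R = R) {r : ℝ} (hr : 0 ≤ r) {z : E} (hSt : 0 ≤ St.reApplyInnerSelf (R z))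
    (hT : (⟪I • St (R z), P (Q z)⟫_ℂ).re ≤ T.reApplyInnerSelf z)
    (hz : symbol r Q R z = 0) : 0 ≤ r * T.reApplyInnerSelf z := by
  have hPz : ((r : ℂ) * I) • P (Q z) + R z = 0 := symbol_comp_apply_eq_zero hPR hz
  have hPQ : (r : ℂ) • P (Q z) = I • R z := by
    have := congrArg (fun w => I • w) hPz
    simp only [smul_add, smul_smul, smul_zero] at this
    rw [show I * (r * I) = -(r : ℂ) by linear_combination (r : ℂ) * I_mul_I, neg_smul,
      neg_add_eq_zero] at this
    exact this
  calc 0 ≤ (⟪I • St (R z), I • R z⟫_ℂ).re := by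
        simpa [inner_smul_left, inner_smul_right, ← mul_assoc] using
          hSt.trans_eq (reApplyInnerSelf_apply _ _)
    _ = r * (⟪I • St (R z), P (Q z)⟫_ℂ).re := by rw [← hPQ, inner_smul_right, re_ofReal_mul]
    _ ≤ r * T.reApplyInnerSelf z := by gcongr

end Symbol

section Multiplier

variable {E : Type*} [NormedAddCommGroup E] [InnerProductSpace ℂ E]

theorem abs_reApplyInnerSelf_le (T : E →L[ℂ] E) (z : E) :
    |T.reApplyInnerSelf z| ≤ ‖T‖ * ‖z‖ ^ 2 :=
  calc |T.reApplyInnerSelf z| ≤ ‖T z‖ * ‖z‖ :=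
        (RCLike.abs_re_le_norm _).trans (norm_inner_le_norm _ _)
    _ ≤ ‖T‖ * ‖z‖ * ‖z‖ := by gcongr; exact T.le_opNorm z
    _ = ‖T‖ * ‖z‖ ^ 2 := by ring

/-- The Kawashima-type multiplier `M + S − i ε K`. -/
def multiplier (M ε : ℝ) (S K : E →L[ℂ] E) : E →L[ℂ] E :=
  (M : ℂ) • 1 + S - ((ε : ℂ) * I) • K

theorem reApplyInnerSelf_multiplier_mul (M ε : ℝ) (S K T : E →L[ℂ] E) (z : E) :
    (multiplier M ε S K * T).reApplyInnerSelf z = M * T.reApplyInnerSelf z +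
      (S * T).reApplyInnerSelf z - ε * (I • (K * T)).reApplyInnerSelf z := by
  simp [multiplier, reApplyInnerSelf_apply, inner_add_left, inner_smul_left,
    -Complex.coe_smul, sub_eq_add_neg]

theorem isSymmetric_multiplier_mul {A₀ S K : E →L[ℂ] E} (hA₀ : A₀.IsSymmetric)
    (hS : (S * A₀).IsSymmetric) (hK : (I • (K * A₀)).IsSymmetric) (M ε : ℝ) :
    (multiplier M ε S K * A₀).IsSymmetric := by
  have hsum := ((hA₀.smul (conj_ofReal M)).add hS).sub (hK.smul (conj_ofReal ε))
  convert hsum using 1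
  ext z
  simp [multiplier, smul_smul]

theorem abs_mul_reApplyInnerSelf_I_smul_mul_le {K T : E →L[ℂ] E} {ε : ℝ}
    (hε : |ε| * (‖K‖ * ‖T‖) ≤ 1) (z : E) :
    |ε * (I • (K * T)).reApplyInnerSelf z| ≤ ‖z‖ ^ 2 :=
  calc |ε * (I • (K * T)).reApplyInnerSelf z|
      = |ε| * |(I • (K * T)).reApplyInnerSelf z| := abs_mul _ _
    _ ≤ |ε| * (‖I • (K * T)‖ * ‖z‖ ^ 2) := by gcongr; exact abs_reApplyInnerSelf_le _ _
    _ ≤ |ε| * (‖K‖ * ‖T‖ * ‖z‖ ^ 2) := by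
        rw [norm_smul, norm_I, one_mul]; gcongr; exact norm_mul_le _ _
    _ ≤ ‖z‖ ^ 2 := by
        rw [← mul_assoc]; exact mul_le_of_le_one_left (sq_nonneg _) hε

theorem norm_sq_le_reApplyInnerSelf_multiplier_mul {A₀ S K : E →L[ℂ] E} {a M ε : ℝ}
    (hA₀ : ∀ z, a * ‖z‖ ^ 2 ≤ A₀.reApplyInnerSelf z) (hM0 : 0 ≤ M) (hM : ‖S * A₀‖ + 2 ≤ M * a)
    (hε : |ε| * (‖K‖ * ‖A₀‖) ≤ 1) (z : E) :
    ‖z‖ ^ 2 ≤ (multiplier M ε S K * A₀).reApplyInnerSelf z := by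
  have hS := neg_le_of_abs_le (abs_reApplyInnerSelf_le (S * A₀) z)
  have hK := le_of_abs_le (abs_mul_reApplyInnerSelf_I_smul_mul_le hε z)
  rw [reApplyInnerSelf_multiplier_mul]
  nlinarith [mul_le_mul_of_nonneg_left (hA₀ z) hM0,
    mul_le_mul_of_nonneg_right hM (sq_nonneg ‖z‖)]

theorem reApplyInnerSelf_multiplier_mul_le {A₀ S K : E →L[ℂ] E} {M ε : ℝ} (hM : 0 ≤ M)
    (hε : |ε| * (‖K‖ * ‖A₀‖) ≤ 1) (z : E) :
    (multiplier M ε S K * A₀).reApplyInnerSelf z ≤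
      (M * ‖A₀‖ + ‖S * A₀‖ + 1) * ‖z‖ ^ 2 := by
  have hS := le_of_abs_le (abs_reApplyInnerSelf_le (S * A₀) z)
  have hA₀ := mul_le_mul_of_nonneg_left (le_of_abs_le (abs_reApplyInnerSelf_le A₀ z)) hM
  have hK := neg_le_of_abs_le (abs_mul_reApplyInnerSelf_I_smul_mul_le hε z)
  rw [reApplyInnerSelf_multiplier_mul]
  linarith

theorem reApplyInnerSelf_multiplier_mul_symbol {A : E →L[ℂ] E} (hA : A.IsSymmetric)
    (M ε r : ℝ) (S K L : E →L[ℂ] E) (z : E) :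
    (multiplier M ε S K * symbol r A L).reApplyInnerSelf z =
      M * L.reApplyInnerSelf z + (S * L).reApplyInnerSelf z
        + r * (I • (S * A)).reApplyInnerSelf z
        + ε * (r * (K * A).reApplyInnerSelf z - (I • (K * L)).reApplyInnerSelf z) := by
  have hAim : (⟪A z, z⟫_ℂ).im = 0 := hA.im_inner_apply_self z
  have hre (T : E →L[ℂ] E) : (⟪T (symbol r A L z), z⟫_ℂ).re =
      r * (I • (T * A)).reApplyInnerSelf z + (T * L).reApplyInnerSelf z := by
    simp [symbol, reApplyInnerSelf_apply, inner_smul_left, mul_comm]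
  have hIre : (⟪I • K (symbol r A L z), z⟫_ℂ).re =
      (I • (K * L)).reApplyInnerSelf z - r * (K * A).reApplyInnerSelf z := by
    simp [symbol, reApplyInnerSelf_apply, inner_smul_left, sub_eq_neg_add, mul_comm]
  have hL : (⟪symbol r A L z, z⟫_ℂ).re = L.reApplyInnerSelf z := by
    simp [symbol, reApplyInnerSelf_apply, hAim]
  rw [reApplyInnerSelf_multiplier_mul]
  change M * (⟪symbol r A L z, z⟫_ℂ).re + (⟪S (symbol r A L z), z⟫_ℂ).re
    - ε * (⟪I • K (symbol r A L z), z⟫_ℂ).re = _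
  rw [hL, hre, hIre]
  ring

theorem mul_reApplyInnerSelf_I_smul_mul_le {K L : E →L[ℂ] E} {k δ : ℝ} (hK : ‖K‖ ≤ k)
    (hδ : 0 < δ) (τ : ℝ) (z : E) :
    τ * (I • (K * L)).reApplyInnerSelf z ≤
      δ / 2 * τ ^ 2 * ‖z‖ ^ 2 + k ^ 2 / (2 * δ) * ‖L z‖ ^ 2 := by
  have hbound : |(I • (K * L)).reApplyInnerSelf z| ≤ k * ‖L z‖ * ‖z‖ :=
    calc |(I • (K * L)).reApplyInnerSelf z| ≤ ‖I • K (L z)‖ * ‖z‖ :=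
          (RCLike.abs_re_le_norm _).trans (norm_inner_le_norm _ _)
      _ ≤ k * ‖L z‖ * ‖z‖ := by
          rw [norm_smul, norm_I, one_mul]; gcongr; exact K.le_of_opNorm_le hK _
  calc τ * (I • (K * L)).reApplyInnerSelf z ≤ |τ| * (k * ‖L z‖ * ‖z‖) :=
        (le_abs_self _).trans ((abs_mul _ _).trans_le (by gcongr))
    _ = 2 * (δ * (|τ| * ‖z‖)) * (k * ‖L z‖) / (2 * δ) := by field_simp
    _ ≤ ((δ * (|τ| * ‖z‖)) ^ 2 + (k * ‖L z‖) ^ 2) / (2 * δ) := by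
        gcongr; exact two_mul_le_add_sq _ _
    _ = δ / 2 * τ ^ 2 * ‖z‖ ^ 2 + k ^ 2 / (2 * δ) * ‖L z‖ ^ 2 := by
        rw [mul_pow, mul_pow, sq_abs]; field_simp

/- Young's inequality splits the cross term `K L` between the coercivity of `K A` and the
dissipation of `S L + L`. -/
theorem le_reApplyInnerSelf_multiplier_mul_symbol {A S K L : E →L[ℂ] E} (hA : A.IsSymmetric)
    {M α τ r δ N ℓ k : ℝ} {z : E} (hα : 0 ≤ α) (hδ : 0 < δ) (hM : 1 ≤ M) (hN : 0 ≤ N)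
    (hτ : τ ^ 2 ≤ r * τ) (hτ1 : r * τ ≤ 1) (hαN : α * (N + k ^ 2 * ℓ / (2 * δ)) ≤ 1)
    (hK : ‖K‖ ≤ k)
    (hL : 0 ≤ L.reApplyInnerSelf z) (hSL : 0 ≤ (S * L + L).reApplyInnerSelf z)
    (hLle : ‖L z‖ ^ 2 ≤ ℓ * (S * L + L).reApplyInnerSelf z)
    (hSA : 0 ≤ r * (I • (S * A)).reApplyInnerSelf z)
    (hKA : r * τ * (δ * ‖z‖ ^ 2) ≤
      r * τ * ((K * A).reApplyInnerSelf z + N * (S * L + L).reApplyInnerSelf z)) :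
    α * δ / 2 * (r * τ) * ‖z‖ ^ 2 ≤
      (multiplier M (α * τ) S K * symbol r A L).reApplyInnerSelf z := by
  have hsplit : (S * L + L).reApplyInnerSelf z =
      (S * L).reApplyInnerSelf z + L.reApplyInnerSelf z := by
    simp [reApplyInnerSelf_apply, inner_add_left]
  have hcross : τ * (I • (K * L)).reApplyInnerSelf z ≤
      δ / 2 * (r * τ) * ‖z‖ ^ 2 + k ^ 2 * ℓ / (2 * δ) * (S * L + L).reApplyInnerSelf z := by
    calc τ * (I • (K * L)).reApplyInnerSelf z
        ≤ δ / 2 * τ ^ 2 * ‖z‖ ^ 2 + k ^ 2 / (2 * δ) * ‖L z‖ ^ 2 :=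
          mul_reApplyInnerSelf_I_smul_mul_le hK hδ τ z
      _ ≤ δ / 2 * (r * τ) * ‖z‖ ^ 2
          + k ^ 2 / (2 * δ) * (ℓ * (S * L + L).reApplyInnerSelf z) := by gcongr
      _ = _ := by ring
  rw [reApplyInnerSelf_multiplier_mul_symbol hA]
  set T := (S * L + L).reApplyInnerSelf z
  have hNT : α * N * (r * τ) * T ≤ α * N * T := by
    have : 0 ≤ α * N * T := by positivity
    nlinarith
  nlinarith [mul_le_mul_of_nonneg_left hcross hα, mul_le_mul_of_nonneg_left hKA hα,
    mul_le_mul_of_nonneg_right hαN hSL, mul_le_mul_of_nonneg_right hM hL]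

end Multiplier

section Decay

theorem exists_pos_mul_le_one (x y : ℝ) : ∃ α > 0, α * x ≤ 1 ∧ α * y ≤ 1 := by
  have hpos : 0 < max 1 (max x y) := zero_lt_one.trans_le (le_max_left _ _)
  exact ⟨(max 1 (max x y))⁻¹, inv_pos.2 hpos, (inv_mul_le_one₀ hpos).2 (by simp),
    (inv_mul_le_one₀ hpos).2 (by simp)⟩

theorem mul_div_one_add_sq_le_one (r : ℝ) : r * (r / (1 + r ^ 2)) ≤ 1 := by
  rw [← mul_div_assoc, div_le_one₀ (by positivity)]
  linarith [sq r]

theorem div_one_add_sq_sq_le (r : ℝ) : (r / (1 + r ^ 2)) ^ 2 ≤ r * (r / (1 + r ^ 2)) :=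
  calc (r / (1 + r ^ 2)) ^ 2 = r ^ 2 / (1 + r ^ 2) / (1 + r ^ 2) := by ring
    _ ≤ r ^ 2 / (1 + r ^ 2) := div_le_self (by positivity) (by linarith [sq_nonneg r])
    _ = r * (r / (1 + r ^ 2)) := by ring

theorem abs_div_one_add_sq_le_one (r : ℝ) : |r / (1 + r ^ 2)| ≤ 1 :=
  (sq_le_one_iff_abs_le_one _).1
    ((div_one_add_sq_sq_le r).trans (mul_div_one_add_sq_le_one r))

variable {E F Ω : Type*} [NormedAddCommGroup E] [InnerProductSpace ℂ E] [FiniteDimensional ℂ E]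
  [NormedAddCommGroup F] [TopologicalSpace Ω] [CompactSpace Ω]

theorem exists_multiplier [NormedSpace ℂ F] {A₀ L S : E →L[ℂ] E} {A K : Ω → E →L[ℂ] E}
    {D : Ω → E →L[ℂ] F} (hA : Continuous A) (hK : Continuous K) (hD : Continuous D)
    (hAsymm : ∀ ω, (A ω).IsSymmetric) (hA₀ : ∀ z, z ≠ 0 → 0 < A₀.reApplyInnerSelf z)
    (hL : ∀ z, 0 ≤ L.reApplyInnerSelf z) (hSL : ∀ z, 0 ≤ (S * L + L).reApplyInnerSelf z)
    (hker : ∀ z, (S * L + L).reApplyInnerSelf z = 0 → L z = 0)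
    (hKA : ∀ ω z, D ω z = 0 → L z = 0 → z ≠ 0 → 0 < (K ω * A ω).reApplyInnerSelf z) :
    ∃ M α : ℝ, ∃ b > 0, ∃ β > 0, ∀ r ω,
      (∀ z, ‖z‖ ^ 2 ≤ (multiplier M (α * (r / (1 + r ^ 2))) S (K ω) * A₀).reApplyInnerSelf z) ∧
      (∀ z, (multiplier M (α * (r / (1 + r ^ 2))) S (K ω) * A₀).reApplyInnerSelf z
        ≤ b * ‖z‖ ^ 2) ∧
      ∀ z, 0 ≤ r * (I • (S * A ω)).reApplyInnerSelf z → (r ≠ 0 → D ω z = 0) →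
        β * (r ^ 2 / (1 + r ^ 2)) * ‖z‖ ^ 2 ≤
          (multiplier M (α * (r / (1 + r ^ 2))) S (K ω) * symbol r (A ω) L).reApplyInnerSelf z := by
  obtain ⟨a, ha, hA₀a⟩ := exists_pos_forall_mul_norm_sq_le hA₀
  obtain ⟨ℓ, hLℓ⟩ := exists_norm_sq_le_mul_reApplyInnerSelf hSL hker
  obtain ⟨N, hN, δ, hδ, hcoer⟩ := exists_coercive_of_pos_on_ker hD (hK.mul hA) hSL
    fun ω z hDz hz => hKA ω z hDz (hker z hz)
  obtain ⟨k, hKk⟩ : ∃ k : ℝ, ∀ ω, ‖K ω‖ ≤ k :=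
    ⟨_, ContinuousMap.norm_coe_le_norm ⟨K, hK⟩⟩
  obtain ⟨M, hM, hMa⟩ : ∃ M : ℝ, 1 ≤ M ∧ ‖S * A₀‖ + 2 ≤ M * a :=
    ⟨max 1 ((‖S * A₀‖ + 2) / a), le_max_left _ _, (div_le_iff₀ ha).1 (le_max_right _ _)⟩
  obtain ⟨α, hα, hαN, hαA₀⟩ := exists_pos_mul_le_one (N + k ^ 2 * ℓ / (2 * δ)) (k * ‖A₀‖)
  have hM0 : 0 ≤ M := zero_le_one.trans hM
  refine ⟨M, α, M * ‖A₀‖ + ‖S * A₀‖ + 1, by positivity, α * δ / 2, by positivity, fun r ω => ?_⟩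
  have hweight : r * (r / (1 + r ^ 2)) = r ^ 2 / (1 + r ^ 2) := by rw [sq, mul_div_assoc]
  have hε : |α * (r / (1 + r ^ 2))| * (‖K ω‖ * ‖A₀‖) ≤ 1 :=
    calc |α * (r / (1 + r ^ 2))| * (‖K ω‖ * ‖A₀‖) ≤ α * 1 * (k * ‖A₀‖) := by
          rw [abs_mul, abs_of_pos hα]
          gcongr
          exacts [abs_div_one_add_sq_le_one r, hKk ω]
      _ ≤ 1 := by rwa [mul_one]
  refine ⟨norm_sq_le_reApplyInnerSelf_multiplier_mul hA₀a hM0 hMa hε,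
    reApplyInnerSelf_multiplier_mul_le hM0 hε, fun z hSA hDz => ?_⟩
  rw [← hweight]
  refine le_reApplyInnerSelf_multiplier_mul_symbol (hAsymm ω) hα.le hδ hM hN
    (div_one_add_sq_sq_le r) (mul_div_one_add_sq_le_one r) hαN (hKk ω) (hL z) (hSL z) (hLℓ z) hSA ?_
  rcases eq_or_ne r 0 with rfl | hr
  · simp
  · have hpos : 0 ≤ r * (r / (1 + r ^ 2)) := hweight ▸ by positivity
    exact mul_le_mul_of_nonneg_left (hcoer ω z (hDz hr)) hpos

theorem decay_standard_with_constraint_general [InnerProductSpace ℂ F]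
    {A₀ A₀inv L S : E →L[ℂ] E} {A K : Ω → E →L[ℂ] E} {Q : Ω → E →L[ℂ] F} {R : E →L[ℂ] F}
    {P St : F →L[ℂ] F} (hA : Continuous A) (hK : Continuous K) (hQ : Continuous Q)
    (hinv : A₀inv * A₀ = 1) (hA₀symm : A₀.IsSymmetric) (hAsymm : ∀ ω, (A ω).IsSymmetric)
    (hA₀ : ∀ z, z ≠ 0 → 0 < A₀.reApplyInnerSelf z) (hL : ∀ z, 0 ≤ L.reApplyInnerSelf z)
    (hQA : ∀ ω, Q ω ∘L A₀inv ∘L A ω = 0) (hRL : R ∘L A₀inv ∘L L = 0)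
    (hQLRA : ∀ ω, Q ω ∘L A₀inv ∘L L + R ∘L A₀inv ∘L A ω = 0)
    (hSA₀ : (S * A₀).IsSymmetric) (hSL : ∀ z, 0 ≤ (S * L + L).reApplyInnerSelf z)
    (hker : ∀ z, (S * L + L).reApplyInnerSelf z = 0 → L z = 0)
    (hPR : P ∘L R = R) (hSt : ∀ z, 0 ≤ St.reApplyInnerSelf (R z))
    (hSA : ∀ ω z, (⟪I • St (R z), P (Q ω z)⟫_ℂ).re ≤ (I • (S * A ω)).reApplyInnerSelf z)
    (hKA₀ : ∀ ω, (I • (K ω * A₀)).IsSymmetric)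
    (hKA : ∀ ω z, (Q ω - P ∘L Q ω) z = 0 → L z = 0 → z ≠ 0 →
      0 < (K ω * A ω).reApplyInnerSelf z) :
    ∃ C > (0 : ℝ), ∃ c > (0 : ℝ), ∀ r, 0 ≤ r → ∀ ω, ∀ u u' : ℝ → E,
      (∀ t, 0 ≤ t → HasDerivWithinAt u (u' t) (Set.Ici 0) t) →
      (∀ t, 0 ≤ t → A₀ (u' t) + symbol r (A ω) L (u t) = 0) →
      symbol r (Q ω) R (u 0) = 0 →
      ∀ t, 0 ≤ t → ‖u t‖ ≤ C * Real.exp (-(c * (r ^ 2 / (1 + r ^ 2)) * t)) * ‖u 0‖ := by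
  obtain ⟨M, α, b, hb, β, hβ, hmultiplier⟩ := exists_multiplier hA hK
    (hQ.sub (continuous_const.clm_comp hQ)) hAsymm hA₀ hL hSL hker hKA
  refine ⟨√b, Real.sqrt_pos.2 hb, β / b, div_pos hβ hb, fun r hr ω u u' hu hode h0 t ht => ?_⟩
  have hconstraint : ∀ s, 0 ≤ s → symbol r (Q ω) R (u s) = 0 := fun s hs =>
    (apply_eq_apply_zero_of_comp_eq_zero hinv
      (symbol_comp_comp_symbol_eq_zero (hQA ω) hRL (hQLRA ω) r) hu hode hs).trans h0
  obtain ⟨hlower, hupper, hdiss⟩ := hmultiplier r ω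
  rw [div_mul_eq_mul_div]
  exact norm_le_of_multiplier hb (by positivity)
    (isSymmetric_multiplier_mul hA₀symm hSA₀ (hKA₀ ω) M _) hlower hupper hu hode
    (fun s hs => hdiss (u s)
      (mul_reApplyInnerSelf_nonneg_of_symbol_apply_eq_zero hPR hr (hSt _) (hSA ω _)
        (hconstraint s hs))
      fun hr0 => sub_comp_apply_eq_zero_of_symbol_apply_eq_zero hPR hr0 (hconstraint s hs)) ht

end Decay

section Matrices

variable {a b c d : ℕ}

/-- The operator between complex Euclidean spaces given by the complexification of a real matrix,
depending real-linearly on the matrix. -/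
def matrixCLM : Matrix (Fin a) (Fin b) ℝ →ₗ[ℝ]
    EuclideanSpace ℂ (Fin b) →L[ℂ] EuclideanSpace ℂ (Fin a) where
  toFun X := (Matrix.toLpLin 2 2 (cmap X)).toContinuousLinearMap
  map_add' X Y := by
    rw [cmap, Matrix.map_add _ ofReal_add]
    simp [cmap]
  map_smul' t X := by
    have hcmap : cmap (t • X) = t • cmap X := by ext; simp [cmap]
    ext z : 1
    simp [hcmap, Matrix.toLpLin_apply, Matrix.smul_mulVec]

theorem matrixCLM_toLp (X : Matrix (Fin a) (Fin b) ℝ) (z : Fin b → ℂ) :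
    matrixCLM X (WithLp.toLp 2 z) = WithLp.toLp 2 (cmap X *ᵥ z) := rfl

theorem cmap_mulVec_eq_zero_iff {X : Matrix (Fin a) (Fin b) ℝ} {z : Fin b → ℂ} :
    cmap X *ᵥ z = 0 ↔ matrixCLM X (WithLp.toLp 2 z) = 0 := by
  simp [matrixCLM_toLp]

theorem matrixCLM_mul (X : Matrix (Fin a) (Fin b) ℝ) (Y : Matrix (Fin b) (Fin c) ℝ) :
    matrixCLM (X * Y) = matrixCLM X ∘L matrixCLM Y := by
  have hcmap : cmap (X * Y) = cmap X * cmap Y := Matrix.map_mul (f := ofRealHom)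
  ext z : 1
  change WithLp.toLp 2 (cmap (X * Y) *ᵥ z.ofLp) = WithLp.toLp 2 (cmap X *ᵥ cmap Y *ᵥ z.ofLp)
  rw [hcmap, Matrix.mulVec_mulVec]

theorem matrixCLM_comp_comp (X : Matrix (Fin a) (Fin b) ℝ) (Y : Matrix (Fin b) (Fin c) ℝ)
    (Z : Matrix (Fin c) (Fin d) ℝ) :
    matrixCLM X ∘L matrixCLM Y ∘L matrixCLM Z = matrixCLM (X * Y * Z) := by
  rw [Matrix.mul_assoc, matrixCLM_mul, matrixCLM_mul]

theorem matrixCLM_mul_matrixCLM (X Y : Matrix (Fin a) (Fin a) ℝ) :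
    matrixCLM X * matrixCLM Y = matrixCLM (X * Y) :=
  (matrixCLM_mul X Y).symm

theorem matrixCLM_one : matrixCLM (1 : Matrix (Fin a) (Fin a) ℝ) = 1 := by
  have hcmap : cmap (1 : Matrix (Fin a) (Fin a) ℝ) = 1 := Matrix.map_one _ ofReal_zero ofReal_one
  ext z : 1
  change WithLp.toLp 2 (cmap 1 *ᵥ z.ofLp) = z
  rw [hcmap, Matrix.one_mulVec]

theorem matrixCLM_one_sub_mul (X : Matrix (Fin a) (Fin a) ℝ) (Y : Matrix (Fin a) (Fin b) ℝ) :
    matrixCLM ((1 - X) * Y) = matrixCLM Y - matrixCLM X ∘L matrixCLM Y := by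
  rw [Matrix.sub_mul, Matrix.one_mul, map_sub, matrixCLM_mul]

theorem matrixCLM_comp_eq_of_mulVec_eq {X : Matrix (Fin a) (Fin a) ℝ}
    {Y : Matrix (Fin a) (Fin b) ℝ} (h : ∀ φ, X *ᵥ Y *ᵥ φ = Y *ᵥ φ) :
    matrixCLM X ∘L matrixCLM Y = matrixCLM Y := by
  have hXY : X * Y = Y := Matrix.mulVec_injective (funext fun φ => by rw [← mulVec_mulVec, h])
  rw [← matrixCLM_mul, hXY]

theorem inner_matrixCLM_left (X : Matrix (Fin a) (Fin b) ℝ) (z : EuclideanSpace ℂ (Fin b))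
    (w : EuclideanSpace ℂ (Fin a)) : ⟪matrixCLM X z, w⟫_ℂ = ⟪z, matrixCLM Xᵀ w⟫_ℂ := by
  have hcmap : (cmap X)ᴴ = cmap Xᵀ := by ext; simp [cmap]
  change w.ofLp ⬝ᵥ star (cmap X *ᵥ z.ofLp) = (cmap Xᵀ *ᵥ w.ofLp) ⬝ᵥ star z.ofLp
  rw [Matrix.star_mulVec, hcmap, dotProduct_comm, ← Matrix.dotProduct_mulVec, dotProduct_comm]

theorem isSymmetric_matrixCLM {X : Matrix (Fin a) (Fin a) ℝ} (hX : Xᵀ = X) :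
    (matrixCLM X).IsSymmetric := fun z w => by
  simpa [hX] using inner_matrixCLM_left X z w

theorem isSymmetric_I_smul_matrixCLM {X : Matrix (Fin a) (Fin a) ℝ} (hX : Xᵀ = -X) :
    (I • matrixCLM X).IsSymmetric := fun z w => by
  simp [inner_smul_left, inner_smul_right, inner_matrixCLM_left, hX]

theorem reIP_eq_re_inner (x y : Fin a → ℂ) :
    reIP x y = (⟪WithLp.toLp 2 x, WithLp.toLp 2 y⟫_ℂ).re := by
  rw [← RCLike.re_to_complex, inner_re_symm]
  rfl

theorem cnrm_eq_norm (z : Fin a → ℂ) : cnrm z = ‖WithLp.toLp 2 z‖ := by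
  simp [cnrm, EuclideanSpace.norm_eq, normSq_eq_norm_sq]

theorem reIP_cmap_mulVec (X : Matrix (Fin a) (Fin a) ℝ) (z : Fin a → ℂ) :
    reIP (cmap X *ᵥ z) z = (matrixCLM X).reApplyInnerSelf (WithLp.toLp 2 z) :=
  reIP_eq_re_inner _ _

theorem symP_add (X Y : Matrix (Fin a) (Fin a) ℝ) : symP (X + Y) = symP X + symP Y := by
  simp only [symP, transpose_add, ← smul_add, add_add_add_comm]

theorem transpose_symP (X : Matrix (Fin a) (Fin a) ℝ) : (symP X)ᵀ = symP X := by
  simp [symP, add_comm]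

theorem reApplyInnerSelf_matrixCLM_symP (X : Matrix (Fin a) (Fin a) ℝ)
    (z : EuclideanSpace ℂ (Fin a)) :
    (matrixCLM (symP X)).reApplyInnerSelf z = (matrixCLM X).reApplyInnerSelf z := by
  have htranspose : (⟪matrixCLM Xᵀ z, z⟫_ℂ).re = (⟪matrixCLM X z, z⟫_ℂ).re := by
    rw [inner_matrixCLM_left, transpose_transpose]
    exact inner_re_symm (𝕜 := ℂ) _ _
  calc (matrixCLM (symP X)).reApplyInnerSelf z
      = 2⁻¹ * ((⟪matrixCLM X z, z⟫_ℂ).re + (⟪matrixCLM Xᵀ z, z⟫_ℂ).re) := by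
        simp [reApplyInnerSelf_apply, symP, inner_add_left, inner_smul_left, mul_add,
          ← Complex.coe_smul (E := EuclideanSpace ℂ (Fin a))]
    _ = (matrixCLM X).reApplyInnerSelf z := by
        rw [htranspose, ← two_mul, inv_mul_cancel_left₀ two_ne_zero]
        rfl

theorem reIP_I_smul_cmap_skewP_mulVec (X : Matrix (Fin a) (Fin a) ℝ) (z : Fin a → ℂ) :
    reIP ((I • cmap (skewP X)) *ᵥ z) z =
      (I • matrixCLM X).reApplyInnerSelf (WithLp.toLp 2 z) := by
  rw [Matrix.smul_mulVec, reIP_eq_re_inner, WithLp.toLp_smul, ← matrixCLM_toLp]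
  set w := WithLp.toLp 2 z
  have htranspose : (⟪matrixCLM Xᵀ w, w⟫_ℂ).im = -(⟪matrixCLM X w, w⟫_ℂ).im := by
    rw [inner_matrixCLM_left, transpose_transpose]
    exact inner_im_symm (𝕜 := ℂ) _ _
  calc (⟪I • matrixCLM (skewP X) w, w⟫_ℂ).re
      = 2⁻¹ * ((⟪matrixCLM X w, w⟫_ℂ).im - (⟪matrixCLM Xᵀ w, w⟫_ℂ).im) := by
        simp [skewP, mul_sub]
    _ = (⟪matrixCLM X w, w⟫_ℂ).im := by
        rw [htranspose, sub_neg_eq_add, ← two_mul, inv_mul_cancel_left₀ two_ne_zero]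
    _ = (I • matrixCLM X).reApplyInnerSelf w := by
        simp [reApplyInnerSelf_apply, inner_smul_left]

theorem matrixCLM_apply_eq_zero_of_kerC_symP_eq {X Y : Matrix (Fin a) (Fin a) ℝ}
    (hX : ∀ z, 0 ≤ (matrixCLM X).reApplyInnerSelf z) (hXY : kerC (symP X) = kerC Y)
    {z : EuclideanSpace ℂ (Fin a)} (hz : (matrixCLM X).reApplyInnerSelf z = 0) :
    matrixCLM Y z = 0 := by
  have hsymP : matrixCLM (symP X) z = 0 := apply_eq_zero_of_reApplyInnerSelf_eq_zero
    ⟨isSymmetric_matrixCLM (transpose_symP X), fun w => by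
      rw [reApplyInnerSelf_matrixCLM_symP]; exact hX w⟩
    (by rw [reApplyInnerSelf_matrixCLM_symP, hz])
  exact cmap_mulVec_eq_zero_iff.1 (hXY.subset (cmap_mulVec_eq_zero_iff.2 hsymP))

theorem matrixCLM_inv_mul_matrixCLM_of_pos {X : Matrix (Fin a) (Fin a) ℝ}
    (hX : ∀ z, z ≠ 0 → 0 < (matrixCLM X).reApplyInnerSelf (WithLp.toLp 2 z)) :
    matrixCLM X⁻¹ * matrixCLM X = 1 := by
  have hdet : IsUnit X.det := isUnit_iff_ne_zero.2 fun hdet => by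
    have hdetC : (cmap X).det = 0 := (ofRealHom.map_det X).symm.trans (by simp [hdet])
    obtain ⟨v, hv, hXv⟩ := Matrix.exists_mulVec_eq_zero_iff.2 hdetC
    have := hX v hv
    simp [reApplyInnerSelf_apply, matrixCLM_toLp, hXv] at this
  rw [matrixCLM_mul_matrixCLM, Matrix.nonsing_inv_mul X hdet, matrixCLM_one]

theorem continuous_matrixCLM : Continuous (matrixCLM (a := a) (b := b)) :=
  LinearMap.continuous_of_finiteDimensional _

theorem continuous_matrixCLM_sum_smul {ι : Type*} [Fintype ι] (X : ι → Matrix (Fin a) (Fin b) ℝ) :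
    Continuous fun ω : ι → ℝ => matrixCLM (∑ j, ω j • X j) := by
  simp only [map_sum, map_smul]
  fun_prop

instance compactSpace_setOf_sum_sq_eq_one {ι : Type*} [Fintype ι] :
    CompactSpace {ω : ι → ℝ // ∑ j, ω j ^ 2 = 1} := by
  suffices IsCompact {ω : ι → ℝ | ∑ j, ω j ^ 2 = 1} from isCompact_iff_compactSpace.1 this
  convert (isCompact_sphere (0 : EuclideanSpace ℝ ι) 1).image (PiLp.continuous_ofLp 2 _) using 1
  ext ω
  rw [EuclideanSpace.sphere_zero_eq _ zero_le_one, one_pow]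
  exact ⟨fun hω => ⟨WithLp.toLp 2 ω, hω, rfl⟩, by rintro ⟨x, hx, rfl⟩; exact hx⟩

theorem reApplyInnerSelf_I_smul_matrixCLM_sub (X : Matrix (Fin a) (Fin a) ℝ)
    (Y Z : Matrix (Fin b) (Fin a) ℝ) (T : Matrix (Fin b) (Fin b) ℝ)
    (z : EuclideanSpace ℂ (Fin a)) :
    (I • matrixCLM (X - Yᵀ * T * Z)).reApplyInnerSelf z = (I • matrixCLM X).reApplyInnerSelf z -
      (⟪I • matrixCLM T (matrixCLM Z z), matrixCLM Y z⟫_ℂ).re := by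
  simp [reApplyInnerSelf_apply, matrixCLM_mul, inner_sub_left, inner_smul_left,
    inner_matrixCLM_left Yᵀ]

end Matrices

/-- **Theorem 5.2 (decay of the standard type for systems with constraint,
pointwise estimate).** Under conditions (A), (C), (S), (S*)₂ and (K*), solutions of
`A⁰û′ + i r A(ω) û + L û = 0` whose data satisfy the constraint
`i r Q(ω)û(0) + R û(0) = 0` obey `|û(t)| ≤ C e^{−c ρ(r) t} |û(0)|`, `ρ(r) = r²/(1+r²)`. -/
theorem decay_standard_with_constraint
    (m n m1 : ℕ) (hm1 : 1 ≤ m1) (hm1m : m1 < m) (hn : 1 ≤ n)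
    (A0 : Matrix (Fin m) (Fin m) ℝ) (A : Fin n → Matrix (Fin m) (Fin m) ℝ)
    (L : Matrix (Fin m) (Fin m) ℝ)
    (Q : Fin n → Matrix (Fin m1) (Fin m) ℝ) (R : Matrix (Fin m1) (Fin m) ℝ)
    -- condition (A)
    (hA0sym : A0ᵀ = A0) (hAsym : ∀ j, (A j)ᵀ = A j)
    (hA0pos : ∀ z : Fin m → ℂ, z ≠ 0 → 0 < reIP ((cmap A0).mulVec z) z)
    (hLnn : ∀ z : Fin m → ℂ, 0 ≤ reIP ((cmap L).mulVec z) z)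
    (hLker : ∃ z : Fin m → ℂ, z ≠ 0 ∧ z ∈ kerC L)
    -- condition (C)
    (hC1 : ∀ ω : Fin n → ℝ, (∑ j, ω j ^ 2 = 1) →
      (∑ j, ω j • Q j) * A0⁻¹ * (∑ j, ω j • A j) = 0)
    (hC2 : R * A0⁻¹ * L = 0)
    (hC3 : ∀ ω : Fin n → ℝ, (∑ j, ω j ^ 2 = 1) →
      (∑ j, ω j • Q j) * A0⁻¹ * L + R * A0⁻¹ * (∑ j, ω j • A j) = 0)
    -- condition (S)
    (S : Matrix (Fin m) (Fin m) ℝ)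
    (hSA0 : (S * A0)ᵀ = S * A0)
    (hSLnn : ∀ z : Fin m → ℂ, 0 ≤ reIP ((cmap (symP (S * L) + symP L)).mulVec z) z)
    (hSLker : kerC (symP (S * L) + symP L) = kerC L)
    -- `Π₁` : the orthogonal projection of `ℂ^{m₁}` onto `Image(R)`; `Π₂ = I − Π₁`
    (Pi1 : Matrix (Fin m1) (Fin m1) ℝ)
    (hPi1sym : Pi1ᵀ = Pi1) (hPi1idem : Pi1 * Pi1 = Pi1)
    (hPi1fix : ∀ φ : Fin m → ℝ, Pi1.mulVec (R.mulVec φ) = R.mulVec φ)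
    (hPi1ran : ∀ z : Fin m1 → ℝ, ∃ φ : Fin m → ℝ, Pi1.mulVec z = R.mulVec φ)
    -- condition (S*)₂ : there is `S̃` with `S̃₁ ≥ 0` on `Image(R)` such that, with
    -- `T(ω) = (Π₁Q(ω))ᵀ S̃ R`, one has `i(SA(ω) − T(ω))₂ ≥ 0` on `ℂᵐ`
    (St : Matrix (Fin m1) (Fin m1) ℝ)
    (hSt : ∀ φ : Fin m → ℂ,
      0 ≤ reIP ((cmap (symP St)).mulVec ((cmap R).mulVec φ)) ((cmap R).mulVec φ))
    (hSstar2 : ∀ ω : Fin n → ℝ, (∑ j, ω j ^ 2 = 1) → ∀ z : Fin m → ℂ,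
      0 ≤ reIP ((Complex.I • cmap (skewP
        (S * (∑ j, ω j • A j) - (Pi1 * (∑ j, ω j • Q j))ᵀ * St * R))).mulVec z) z)
    -- condition (K*): positivity on `X_ω ∩ Ker(L)`
    (K : (Fin n → ℝ) → Matrix (Fin m) (Fin m) ℝ)
    (hKsmooth : ∀ i j, ContDiff ℝ (⊤ : ℕ∞) (fun ω => K ω i j))
    (hKodd : ∀ ω : Fin n → ℝ, (∑ j, ω j ^ 2 = 1) → K (-ω) = - K ω)
    (hKA0 : ∀ ω : Fin n → ℝ, (∑ j, ω j ^ 2 = 1) → (K ω * A0)ᵀ = -(K ω * A0))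
    (hKpos : ∀ ω : Fin n → ℝ, (∑ j, ω j ^ 2 = 1) → ∀ z : Fin m → ℂ,
      (cmap ((1 - Pi1) * (∑ j, ω j • Q j))).mulVec z = 0 → z ∈ kerC L → z ≠ 0 →
      0 < reIP ((cmap (symP (K ω * (∑ j, ω j • A j)))).mulVec z) z) :
    ∃ C > (0:ℝ), ∃ c > (0:ℝ), ∀ r : ℝ, 0 ≤ r → ∀ ω : Fin n → ℝ, (∑ j, ω j ^ 2 = 1) →
      ∀ u u' : ℝ → (Fin m → ℂ),
      (∀ t : ℝ, 0 ≤ t → HasDerivWithinAt u (u' t) (Set.Ici 0) t) →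
      (∀ t : ℝ, 0 ≤ t →
        (cmap A0).mulVec (u' t)
          + ((r : ℂ) * Complex.I) • (cmap (∑ j, ω j • A j)).mulVec (u t)
          + (cmap L).mulVec (u t) = 0) →
      (((r : ℂ) * Complex.I) • (cmap (∑ j, ω j • Q j)).mulVec (u 0)
          + (cmap R).mulVec (u 0) = 0) →
      ∀ t : ℝ, 0 ≤ t →
        cnrm (u t) ≤ C * Real.exp (-(c * (r ^ 2 / (1 + r ^ 2)) * t)) * cnrm (u 0) := by
  simp only [← symP_add, kerC, Set.mem_ofPred_eq, cmap_mulVec_eq_zero_iff, reIP_cmap_mulVec,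
    reApplyInnerSelf_matrixCLM_symP, reIP_I_smul_cmap_skewP_mulVec, ← matrixCLM_toLp,
    reApplyInnerSelf_I_smul_matrixCLM_sub, sub_nonneg, matrixCLM_one_sub_mul]
    at hA0pos hLnn hSLnn hSt hSstar2 hKpos
  obtain ⟨C, hC, c, hc, hdecay⟩ := decay_standard_with_constraint_general
    (A := fun ω : {ω : Fin n → ℝ // ∑ j, ω j ^ 2 = 1} => matrixCLM (∑ j, ω.1 j • A j))
    (K := fun ω => matrixCLM (K ω)) (Q := fun ω => matrixCLM (∑ j, ω.1 j • Q j))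
    (R := matrixCLM R) (S := matrixCLM S) (P := matrixCLM Pi1) (St := matrixCLM St)
    (hA := (continuous_matrixCLM_sum_smul A).comp continuous_subtype_val)
    (hK := continuous_matrixCLM.comp (continuous_matrix fun i j =>
      (hKsmooth i j).continuous.comp continuous_subtype_val))
    (hQ := (continuous_matrixCLM_sum_smul Q).comp continuous_subtype_val)
    (hinv := matrixCLM_inv_mul_matrixCLM_of_pos hA0pos)
    (hA₀symm := isSymmetric_matrixCLM hA0sym)
    (hAsymm := fun ω => isSymmetric_matrixCLM (by simp [transpose_sum, hAsym]))
    (hA₀ := fun z hz => hA0pos z.ofLp (by simpa using hz)) (hL := fun z => hLnn z.ofLp)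
    (hQA := fun ω => by rw [matrixCLM_comp_comp, hC1 ω.1 ω.2, map_zero])
    (hRL := by rw [matrixCLM_comp_comp, hC2, map_zero])
    (hQLRA := fun ω => by simp only [matrixCLM_comp_comp, ← map_add, hC3 ω.1 ω.2, map_zero])
    (hSA₀ := by simpa only [matrixCLM_mul_matrixCLM] using isSymmetric_matrixCLM hSA0)
    (hSL := fun z => by simpa only [matrixCLM_mul_matrixCLM, ← map_add] using hSLnn z.ofLp)
    (hker := by simpa only [matrixCLM_mul_matrixCLM, ← map_add] using fun z =>
      matrixCLM_apply_eq_zero_of_kerC_symP_eq (fun w => hSLnn w.ofLp) (symP_add (S * L) L ▸ hSLker))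
    (hPR := matrixCLM_comp_eq_of_mulVec_eq hPi1fix) (hSt := fun z => hSt z.ofLp)
    (hSA := fun ω z => by simpa only [matrixCLM_mul_matrixCLM, matrixCLM_mul Pi1,
      ContinuousLinearMap.comp_apply] using hSstar2 ω.1 ω.2 z.ofLp)
    (hKA₀ := fun ω => by
      simpa only [matrixCLM_mul_matrixCLM] using isSymmetric_I_smul_matrixCLM (hKA0 ω.1 ω.2))
    (hKA := fun ω z => by
      simpa only [matrixCLM_mul_matrixCLM, ne_eq, WithLp.ofLp_eq_zero] using hKpos ω.1 ω.2 z.ofLp)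
  refine ⟨C, hC, c, hc, fun r hr ω hω u u' hu hode h0 t ht => ?_⟩
  simpa only [cnrm_eq_norm] using hdecay r hr ⟨ω, hω⟩ (fun t => WithLp.toLp 2 (u t))
    (fun t => WithLp.toLp 2 (u' t))
    (fun s hs => (PiLp.hasFDerivAt_toLp (𝕜 := ℝ) 2 _).comp_hasDerivWithinAt s (hu s hs))
    (fun s hs => congrArg (WithLp.toLp 2) ((add_assoc _ _ _).symm.trans (hode s hs)))
    (congrArg (WithLp.toLp 2) h0) t ht
end
end

section
/- Let a > 0, γ > 0 and let A and L be the Timoshenko coefficient matrices. Define K := [[0,1,0,0],[−1,0,0,0],[0,0,0,−1],[0,0,1,0]]. Then K is skew-symmetric, for every φ = (φ₁,φ₂,φ₃,φ₄) ∈ ℂ⁴ one has Re⟨(KA)₁φ, φ⟩ = −|φ₁|² + |φ₂|² + a|φ₃|² − a|φ₄|², and consequently (KA)₁ > 0 on Ker(L): for every nonzero φ ∈ Ker(L) (i.e., φ₁ = φ₄ = 0) one has Re⟨(KA)₁φ, φ⟩ = |φ₂|² + a|φ₃|² > 0. -/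
open Matrix BigOperators Finset

noncomputable section

/-- Coefficient matrix `A` of the Timoshenko system. -/
def TimA (a : ℝ) : Matrix (Fin 4) (Fin 4) ℝ :=
  -(!![0, 1, 0, 0; 1, 0, 0, 0; 0, 0, 0, a; 0, 0, a, 0])

/-- Relaxation matrix `L` of the Timoshenko system. -/
def TimL (γ : ℝ) : Matrix (Fin 4) (Fin 4) ℝ :=
  !![0, 0, 0, 1; 0, 0, 0, 0; 0, 0, 0, 0; -1, 0, 0, γ]

/-!
`K A` is itself the diagonal matrix `diag(-1, 1, a, -a)`, so its Hermitian form is a weighted sum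
of the `|φᵢ|²`. Membership in `Ker(L)` kills exactly the two coordinates with negative weight.
-/

theorem symP_eq_self {m : ℕ} {X : Matrix (Fin m) (Fin m) ℝ} (hX : X.IsSymm) : symP X = X := by
  rw [symP, hX.eq, ← two_smul ℝ X, inv_smul_smul₀ two_ne_zero]

section DiagonalForm

variable {m : ℕ} {d : Fin m → ℝ} {φ : Fin m → ℂ}

theorem reIP_diagonal_mulVec (d : Fin m → ℝ) (φ : Fin m → ℂ) :
    reIP ((cmap (diagonal d)).mulVec φ) φ = ∑ i, d i * Complex.normSq (φ i) := by
  have hd : cmap (diagonal d) = diagonal fun i => (d i : ℂ) := diagonal_map Complex.ofReal_zero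
  simp only [reIP, hd, mulVec_diagonal, mul_assoc, Complex.mul_conj, Complex.re_sum,
    Complex.re_ofReal_mul, Complex.ofReal_re]

theorem reIP_diagonal_mulVec_pos (hd : ∀ i, φ i ≠ 0 → 0 < d i) (hφ : φ ≠ 0) :
    0 < reIP ((cmap (diagonal d)).mulVec φ) φ := by
  have term_pos (i : Fin m) (hi : φ i ≠ 0) : 0 < d i * Complex.normSq (φ i) :=
    mul_pos (hd i hi) (Complex.normSq_pos.2 hi)
  have term_nonneg (i : Fin m) : 0 ≤ d i * Complex.normSq (φ i) := by
    by_cases hi : φ i = 0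
    · simp [hi]
    · exact (term_pos i hi).le
  obtain ⟨j, hj⟩ := Function.ne_iff.1 hφ
  rw [reIP_diagonal_mulVec]
  exact sum_pos' (fun i _ => term_nonneg i) ⟨j, mem_univ j, term_pos j hj⟩

end DiagonalForm

/-- The compensating matrix `K` of the Timoshenko system, chosen so that the symmetric part of
`K A` is positive on `Ker(L)`. -/
def TimK : Matrix (Fin 4) (Fin 4) ℝ :=
  !![0, 1, 0, 0; -1, 0, 0, 0; 0, 0, 0, -1; 0, 0, 1, 0]

theorem transpose_TimK : TimKᵀ = -TimK := by
  ext i j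
  fin_cases i <;> fin_cases j <;> simp [TimK]

theorem TimK_mul_TimA (a : ℝ) : TimK * TimA a = diagonal ![-1, 1, a, -a] := by
  ext i j
  fin_cases i <;> fin_cases j <;> simp [TimK, TimA, mul_apply, Fin.sum_univ_four]

theorem symP_TimK_mul_TimA (a : ℝ) : symP (TimK * TimA a) = diagonal ![-1, 1, a, -a] := by
  rw [TimK_mul_TimA, symP_eq_self (isSymm_diagonal _)]

theorem reIP_symP_TimK_mul_TimA (a : ℝ) (φ : Fin 4 → ℂ) :
    reIP ((cmap (symP (TimK * TimA a))).mulVec φ) φ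
      = -Complex.normSq (φ 0) + Complex.normSq (φ 1)
          + a * Complex.normSq (φ 2) - a * Complex.normSq (φ 3) := by
  rw [symP_TimK_mul_TimA, reIP_diagonal_mulVec, Fin.sum_univ_four]
  simp [sub_eq_add_neg]

theorem mem_kerC_TimL {γ : ℝ} {φ : Fin 4 → ℂ} : φ ∈ kerC (TimL γ) ↔ φ 0 = 0 ∧ φ 3 = 0 := by
  have hL : (cmap (TimL γ)).mulVec φ = ![φ 3, 0, 0, -φ 0 + γ * φ 3] := by
    ext i
    fin_cases i <;> simp [cmap, TimL, mulVec, dotProduct, Fin.sum_univ_four]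
  have hker : φ ∈ kerC (TimL γ) ↔ φ 3 = 0 ∧ -φ 0 + γ * φ 3 = 0 := by
    simp [kerC, hL]
  rw [hker, and_comm]
  exact and_congr_left fun h3 => by rw [h3, mul_zero, add_zero, neg_eq_zero]

theorem reIP_symP_TimK_mul_TimA_pos {a γ : ℝ} (ha : 0 < a) {φ : Fin 4 → ℂ}
    (hφ : φ ∈ kerC (TimL γ)) (hne : φ ≠ 0) :
    0 < reIP ((cmap (symP (TimK * TimA a))).mulVec φ) φ := by
  obtain ⟨h0, h3⟩ := mem_kerC_TimL.1 hφ
  rw [symP_TimK_mul_TimA]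
  refine reIP_diagonal_mulVec_pos (fun i hi => ?_) hne
  fin_cases i
  · exact absurd h0 hi
  · exact one_pos
  · exact ha
  · exact absurd h3 hi

/-- **Condition (K) for the Timoshenko system.** With
`K = [[0,1,0,0],[−1,0,0,0],[0,0,0,−1],[0,0,1,0]]`, `K` is skew-symmetric,
`Re⟨(KA)₁φ, φ⟩ = −|φ₁|² + |φ₂|² + a|φ₃|² − a|φ₄|²`, and `(KA)₁ > 0` on `Ker(L)`:
for nonzero `φ ∈ Ker(L)`, `Re⟨(KA)₁φ, φ⟩ = |φ₂|² + a|φ₃|² > 0`. -/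
theorem timoshenko_condition_K
    (a γ : ℝ) (ha : 0 < a) (hγ : 0 < γ)
    (K : Matrix (Fin 4) (Fin 4) ℝ)
    (hK : K = !![0, 1, 0, 0; -1, 0, 0, 0; 0, 0, 0, -1; 0, 0, 1, 0]) :
    Kᵀ = -K ∧
    (∀ φ : Fin 4 → ℂ,
      reIP ((cmap (symP (K * TimA a))).mulVec φ) φ
        = -Complex.normSq (φ 0) + Complex.normSq (φ 1)
            + a * Complex.normSq (φ 2) - a * Complex.normSq (φ 3)) ∧
    (∀ φ : Fin 4 → ℂ, φ ∈ kerC (TimL γ) →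
      (reIP ((cmap (symP (K * TimA a))).mulVec φ) φ
          = Complex.normSq (φ 1) + a * Complex.normSq (φ 2)) ∧
      (φ ≠ 0 → 0 < reIP ((cmap (symP (K * TimA a))).mulVec φ) φ)) := by
  obtain rfl : K = TimK := hK
  refine ⟨transpose_TimK, reIP_symP_TimK_mul_TimA a,
    fun φ hφ => ⟨?_, reIP_symP_TimK_mul_TimA_pos ha hφ⟩⟩
  obtain ⟨h0, h3⟩ := mem_kerC_TimL.1 hφ
  simp [reIP_symP_TimK_mul_TimA, h0, h3]
end
end

section
/- Let a > 0, γ > 0 and let A and L be the Timoshenko coefficient matrices. For 0 < β < 4γ/(γ² + 4), define S := −β[[0,0,0,1],[0,0,a,0],[0,a,0,0],[1,0,0,0]]. Then S is symmetric and there exists a constant c > 0 such that Re⟨((SL)₁ + L₁)φ, φ⟩ ≥ c(|φ₁|² + |φ₄|²) for all φ = (φ₁,φ₂,φ₃,φ₄) ∈ ℂ⁴; consequently (SL)₁ + L₁ ≥ 0 on ℂ⁴ and Ker((SL)₁ + L₁) = span{e₂, e₃} = Ker(L). Moreover, for every φ ∈ ℂ⁴, Re⟨i(SA)₂φ, φ⟩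 = β(a² − 1)Im(φ₂φ̄₄); in particular i(SA)₂ = 0 on Ker(L₁) = span{e₁, e₂, e₃}, and if a = 1 then (SA)₂ = 0. -/
open Matrix BigOperators Finset

noncomputable section

/-!
For a real matrix `X` and `z = x + i y`, the forms split into real ones:
`Re⟨Xz, z⟩ = x·Xx + y·Xy` and `Re⟨iXz, z⟩ = y·Xx - x·Xy`.
The matrix `(SL)₁ + L₁` lives on the coordinates `1, 4` only, where it is the `2 × 2` block
`[[β, -βγ/2], [-βγ/2, γ - β]]`; the bound on `β` says exactly that its determinant is positive.
A positive definite block dominates `det / trace` times the identity, which yields the coercivity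
constant. The matrix `(SA)₂` has only the entries `± β (a² - 1) / 2` in the `(2, 4)` plane, the
two entries `β a²` and `β` of `SA` there differing exactly by the factor `a²`.
-/

section RealForms

variable {m n : ℕ}

theorem re_cmap_mulVec_apply (X : Matrix (Fin m) (Fin n) ℝ) (z : Fin n → ℂ) (i : Fin m) :
    ((cmap X *ᵥ z) i).re = (X *ᵥ fun j ↦ (z j).re) i := by
  simp [cmap, mulVec, dotProduct]

theorem im_cmap_mulVec_apply (X : Matrix (Fin m) (Fin n) ℝ) (z : Fin n → ℂ) (i : Fin m) :
    ((cmap X *ᵥ z) i).im = (X *ᵥ fun j ↦ (z j).im) i := by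
  simp [cmap, mulVec, dotProduct]

theorem reIP_eq_dotProduct_add_dotProduct (w z : Fin m → ℂ) :
    reIP w z = (fun i ↦ (z i).re) ⬝ᵥ (fun i ↦ (w i).re)
      + (fun i ↦ (z i).im) ⬝ᵥ (fun i ↦ (w i).im) := by
  simp [reIP, dotProduct, sum_add_distrib, mul_comm]

theorem reIP_zero_left (z : Fin m → ℂ) : reIP 0 z = 0 := by
  simp [reIP]

theorem reIP_cmap_mulVec_self (X : Matrix (Fin m) (Fin m) ℝ) (z : Fin m → ℂ) :
    reIP (cmap X *ᵥ z) z = (fun i ↦ (z i).re) ⬝ᵥ X *ᵥ (fun i ↦ (z i).re)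
      + (fun i ↦ (z i).im) ⬝ᵥ X *ᵥ (fun i ↦ (z i).im) := by
  simp only [reIP_eq_dotProduct_add_dotProduct, re_cmap_mulVec_apply, im_cmap_mulVec_apply]

theorem reIP_I_smul_cmap_mulVec_self (X : Matrix (Fin m) (Fin m) ℝ) (z : Fin m → ℂ) :
    reIP ((Complex.I • cmap X) *ᵥ z) z = (fun i ↦ (z i).im) ⬝ᵥ X *ᵥ (fun i ↦ (z i).re)
      - (fun i ↦ (z i).re) ⬝ᵥ X *ᵥ (fun i ↦ (z i).im) := by
  simp only [reIP_eq_dotProduct_add_dotProduct, smul_mulVec, Pi.smul_apply, smul_eq_mul,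
    Complex.I_mul_re, Complex.I_mul_im, re_cmap_mulVec_apply, im_cmap_mulVec_apply]
  rw [← Pi.neg_def, dotProduct_neg, neg_add_eq_sub]

end RealForms

section Coercivity

variable {m : ℕ} {X : Matrix (Fin m) (Fin m) ℝ} {s : Finset (Fin m)} {c : ℝ}

theorem mul_sum_normSq_le_reIP_of_real
    (hX : ∀ x : Fin m → ℝ, c * ∑ i ∈ s, x i ^ 2 ≤ x ⬝ᵥ X *ᵥ x) (z : Fin m → ℂ) :
    c * ∑ i ∈ s, Complex.normSq (z i) ≤ reIP (cmap X *ᵥ z) z := by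
  simp only [reIP_cmap_mulVec_self, Complex.normSq_apply, ← sq, sum_add_distrib, mul_add]
  exact add_le_add (hX _) (hX _)

theorem kerC_eq_of_mul_sum_normSq_le_reIP (hc : 0 < c)
    (hX : ∀ z : Fin m → ℂ, c * ∑ i ∈ s, Complex.normSq (z i) ≤ reIP (cmap X *ᵥ z) z)
    (hcol : ∀ i, ∀ j ∉ s, X i j = 0) :
    kerC X = {z | ∀ i ∈ s, z i = 0} := by
  ext z
  constructor
  · intro (hz : cmap X *ᵥ z = 0) i hi
    have hsum : ∑ i ∈ s, Complex.normSq (z i) ≤ 0 :=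
      nonpos_of_mul_nonpos_right ((hX z).trans_eq (by rw [hz, reIP_zero_left])) hc
    have hnormSq : Complex.normSq (z i) ≤ 0 :=
      (single_le_sum (fun j _ ↦ Complex.normSq_nonneg (z j)) hi).trans hsum
    exact Complex.normSq_eq_zero.1 (hnormSq.antisymm (Complex.normSq_nonneg _))
  · intro hz
    change cmap X *ᵥ z = 0
    funext i
    change ∑ j, cmap X i j * z j = 0
    refine sum_eq_zero fun j _ ↦ ?_
    by_cases hj : j ∈ s
    · rw [hz j hj, mul_zero]
    · simp [cmap, hcol i j hj]

end Coercivity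

theorem exists_pos_mul_sq_add_sq_le {K : Type*} [Field K] [LinearOrder K] [IsStrictOrderedRing K]
    {p q r : K} (hp : 0 < p) (hdet : q ^ 2 < p * r) :
    ∃ c > 0, ∀ x y, c * (x ^ 2 + y ^ 2) ≤ p * x ^ 2 + 2 * q * x * y + r * y ^ 2 := by
  have hr : 0 < r := pos_of_mul_pos_right ((sq_nonneg q).trans_lt hdet) hp.le
  have htr : 0 < p + r := add_pos hp hr
  obtain ⟨c, hc⟩ : ∃ c, c * (p + r) = p * r - q ^ 2 := ⟨_, div_mul_cancel₀ _ htr.ne'⟩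
  have hc0 : 0 < c := pos_of_mul_pos_left (hc ▸ sub_pos.2 hdet) htr.le
  have hcp : 0 < p - c := by
    have : (p - c) * (p + r) = p ^ 2 + q ^ 2 := by linear_combination -hc
    exact pos_of_mul_pos_left (this ▸ by positivity) htr.le
  refine ⟨c, hc0, fun x y ↦ sub_nonneg.1 (nonneg_of_mul_nonneg_right ?_ hcp)⟩
  -- The shifted form has determinant `(p - c) (r - c) - q² = c²`: complete the square.
  calc 0 ≤ ((p - c) * x + q * y) ^ 2 + (c * y) ^ 2 := by positivity
    _ = (p - c) * (p * x ^ 2 + 2 * q * x * y + r * y ^ 2 - c * (x ^ 2 + y ^ 2)) := by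
      linear_combination y ^ 2 * hc

section Timoshenko

/-- The compensating matrix `S = -β [[0,0,0,1],[0,0,a,0],[0,a,0,0],[1,0,0,0]]` of condition (S)
for the Timoshenko system. -/
def TimS (a β : ℝ) : Matrix (Fin 4) (Fin 4) ℝ :=
  -β • !![0, 0, 0, 1; 0, 0, a, 0; 0, a, 0, 0; 1, 0, 0, 0]

variable (a γ β : ℝ)

theorem transpose_TimS : (TimS a β)ᵀ = TimS a β := by
  ext i j
  fin_cases i <;> fin_cases j <;> simp [TimS]

theorem symP_TimS_mul_TimL_add_symP_TimL :
    symP (TimS a β * TimL γ) + symP (TimL γ) =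
      !![β, 0, 0, -(β * γ / 2); 0, 0, 0, 0; 0, 0, 0, 0; -(β * γ / 2), 0, 0, γ - β] := by
  ext i j
  fin_cases i <;> fin_cases j <;> simp [symP, TimS, TimL] <;> ring

theorem skewP_TimS_mul_TimA :
    skewP (TimS a β * TimA a) = (β * (a ^ 2 - 1) / 2) •
      !![0, 0, 0, 0; 0, 0, 0, 1; 0, 0, 0, 0; 0, -1, 0, 0] := by
  ext i j
  fin_cases i <;> fin_cases j <;> simp [skewP, TimS, TimA] <;> ring

theorem kerC_TimL : kerC (TimL γ) = {φ | φ 0 = 0 ∧ φ 3 = 0} := by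
  ext φ
  have hmulVec : cmap (TimL γ) *ᵥ φ = ![φ 3, 0, 0, -φ 0 + γ * φ 3] := by
    ext i
    fin_cases i <;> simp [cmap, TimL, mulVec, dotProduct, Fin.sum_univ_four]
  change cmap (TimL γ) *ᵥ φ = 0 ↔ φ 0 = 0 ∧ φ 3 = 0
  rw [hmulVec]
  constructor
  · intro h
    have h3 : φ 3 = 0 := congrFun h 0
    have h0 : -φ 0 + γ * φ 3 = 0 := congrFun h 3
    exact ⟨by simpa [h3] using h0, h3⟩
  · rintro ⟨h0, h3⟩
    simp [h0, h3]

theorem reIP_I_smul_skewP_TimS_mul_TimA (φ : Fin 4 → ℂ) :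
    reIP ((Complex.I • cmap (skewP (TimS a β * TimA a))) *ᵥ φ) φ
      = β * (a ^ 2 - 1) * (φ 1 * (starRingEnd ℂ) (φ 3)).im := by
  rw [reIP_I_smul_cmap_mulVec_self, skewP_TimS_mul_TimA]
  simp only [mulVec, dotProduct, Fin.sum_univ_four, Matrix.smul_apply, smul_eq_mul, of_apply,
    cons_val', cons_val_fin_one, cons_val_zero, cons_val_one, Matrix.cons_val, Complex.mul_im,
    Complex.conj_re, Complex.conj_im]
  ring

variable {γ β}

theorem sq_lt_mul_of_lt_four_mul_div (hβ0 : 0 < β) (hβ : β < 4 * γ / (γ ^ 2 + 4)) :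
    (-(β * γ / 2)) ^ 2 < β * (γ - β) := by
  have hlin : β * (γ ^ 2 + 4) < 4 * γ := (lt_div_iff₀ (by positivity)).1 hβ
  linear_combination (β / 4) * hlin

theorem exists_pos_mul_le_reIP_symP_TimS (hβ0 : 0 < β) (hβ : β < 4 * γ / (γ ^ 2 + 4)) :
    ∃ c > 0, ∀ φ : Fin 4 → ℂ, c * ∑ i ∈ {0, 3}, Complex.normSq (φ i)
      ≤ reIP (cmap (symP (TimS a β * TimL γ) + symP (TimL γ)) *ᵥ φ) φ := by
  obtain ⟨c, hc, hform⟩ :=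
    exists_pos_mul_sq_add_sq_le hβ0 (sq_lt_mul_of_lt_four_mul_div hβ0 hβ)
  refine ⟨c, hc, mul_sum_normSq_le_reIP_of_real fun x ↦ ?_⟩
  calc c * ∑ i ∈ {0, 3}, x i ^ 2 = c * (x 0 ^ 2 + x 3 ^ 2) := by simp
    _ ≤ β * x 0 ^ 2 + 2 * -(β * γ / 2) * x 0 * x 3 + (γ - β) * x 3 ^ 2 := hform _ _
    _ = x ⬝ᵥ (symP (TimS a β * TimL γ) + symP (TimL γ)) *ᵥ x := by
      rw [symP_TimS_mul_TimL_add_symP_TimL]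
      simp only [mulVec, dotProduct, Fin.sum_univ_four, of_apply, cons_val', cons_val_fin_one,
        cons_val_zero, cons_val_one, Matrix.cons_val]
      ring

theorem kerC_symP_TimS_mul_TimL_add_symP_TimL
    (hβ0 : 0 < β) (hβ : β < 4 * γ / (γ ^ 2 + 4)) :
    kerC (symP (TimS a β * TimL γ) + symP (TimL γ)) = {φ | φ 0 = 0 ∧ φ 3 = 0} := by
  obtain ⟨c, hc, hcoer⟩ := exists_pos_mul_le_reIP_symP_TimS a hβ0 hβ
  rw [kerC_eq_of_mul_sum_normSq_le_reIP hc hcoer]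
  · simp
  · rw [symP_TimS_mul_TimL_add_symP_TimL]
    intro i j hj
    fin_cases i <;> fin_cases j <;> simp at hj ⊢

end Timoshenko

/-- **Conditions (S), (S)₁ (and (S)₂ when `a = 1`) for the Timoshenko system.**
With `S = −β[[0,0,0,1],[0,0,a,0],[0,a,0,0],[1,0,0,0]]` and `0 < β < 4γ/(γ²+4)`:
`S` is symmetric; `Re⟨((SL)₁+L₁)φ, φ⟩ ≥ c(|φ₁|²+|φ₄|²)`, hence `(SL)₁+L₁ ≥ 0` on `ℂ⁴` and
`Ker((SL)₁+L₁) = span{e₂,e₃} = Ker(L)`; moreover `Re⟨i(SA)₂φ, φ⟩ = β(a²−1)Im(φ₂φ̄₄)`,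
which vanishes on `Ker(L₁) = span{e₁,e₂,e₃}`, and `(SA)₂ = 0` when `a = 1`. -/
theorem timoshenko_conditions_S
    (a γ β : ℝ) (ha : 0 < a) (hγ : 0 < γ)
    (hβ0 : 0 < β) (hβ : β < 4 * γ / (γ ^ 2 + 4))
    (S : Matrix (Fin 4) (Fin 4) ℝ)
    (hS : S = -β • !![0, 0, 0, 1; 0, 0, a, 0; 0, a, 0, 0; 1, 0, 0, 0]) :
    Sᵀ = S ∧
    (∃ c > (0:ℝ), ∀ φ : Fin 4 → ℂ,
      c * (Complex.normSq (φ 0) + Complex.normSq (φ 3))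
        ≤ reIP ((cmap (symP (S * TimL γ) + symP (TimL γ))).mulVec φ) φ) ∧
    (∀ φ : Fin 4 → ℂ,
      0 ≤ reIP ((cmap (symP (S * TimL γ) + symP (TimL γ))).mulVec φ) φ) ∧
    kerC (symP (S * TimL γ) + symP (TimL γ)) = {φ : Fin 4 → ℂ | φ 0 = 0 ∧ φ 3 = 0} ∧
    kerC (symP (S * TimL γ) + symP (TimL γ)) = kerC (TimL γ) ∧
    (∀ φ : Fin 4 → ℂ,
      reIP ((Complex.I • cmap (skewP (S * TimA a))).mulVec φ) φ
        = β * (a ^ 2 - 1) * (φ 1 * (starRingEnd ℂ) (φ 3)).im) ∧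
    (∀ φ : Fin 4 → ℂ, φ 3 = 0 →
      reIP ((Complex.I • cmap (skewP (S * TimA a))).mulVec φ) φ = 0) ∧
    (a = 1 → skewP (S * TimA a) = 0) := by
  obtain rfl : S = TimS a β := hS
  have hker := kerC_symP_TimS_mul_TimL_add_symP_TimL a hβ0 hβ
  have hform := reIP_I_smul_skewP_TimS_mul_TimA a β
  obtain ⟨c, hc, hsum⟩ := exists_pos_mul_le_reIP_symP_TimS a hβ0 hβ
  refine ⟨transpose_TimS a β, ⟨c, hc, fun φ ↦ by simpa using hsum φ⟩, fun φ ↦ ?_, hker,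
    hker.trans (kerC_TimL γ).symm, hform, fun φ hφ ↦ ?_, fun ha1 ↦ ?_⟩
  · exact (mul_nonneg hc.le (sum_nonneg fun i _ ↦ Complex.normSq_nonneg (φ i))).trans (hsum φ)
  · simp [hform, hφ]
  · simp [skewP_TimS_mul_TimA, ha1]
end
end

section
/- Let a > 0, γ > 0 and let A and L be the Timoshenko coefficient matrices. If φ ∈ ℂ⁴ satisfies Lφ = 0, LAφ = 0, LA²φ = 0 and LA³φ = 0, then φ = 0; equivalently, the 16×4 stacked matrix [L; LA; LA²; LA³] has rank 4. Hence the Timoshenko system satisfies the Kalman rank condition (R). -/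
open Matrix BigOperators Finset

noncomputable section

/-!
The kernel of `L` is `φ₀ = φ₃ = 0`. The matrix `A` swaps the coordinates within the pairs `(0, 1)`
and `(2, 3)` up to the factors `-1` and `-a`, so `LAφ = 0` says `φ₁ = φ₂ = 0`: the blocks `L` and
`LA` alone have trivial common kernel. The rank is then full because linear independence of the
columns of a real matrix can be tested over `ℂ`.
-/

theorem rank_eq_card_iff_linearIndependent_col {m n R : Type*} [Fintype n] [CommRing R]
    [Nontrivial R] (M : Matrix m n R) :
    M.rank = Fintype.card n ↔ LinearIndependent R M.col := by
  rw [linearIndependent_iff_card_eq_finrank_span, Set.finrank, ← M.rank_eq_finrank_span_cols,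
    eq_comm]

theorem rank_eq_card_iff_forall_map_mulVec_eq_zero {m n R : Type*} [Finite m] [Fintype n]
    [CommRing R] (S : Type*) [CommRing S] [IsDomain S] [Algebra R S] [FaithfulSMul R S]
    (M : Matrix m n R) :
    M.rank = Fintype.card n ↔ ∀ v : n → S, M.map (algebraMap R S) *ᵥ v = 0 → v = 0 := by
  have : Nontrivial R := (algebraMap R S).domain_nontrivial
  calc M.rank = Fintype.card n
    _ ↔ LinearIndependent R M.col := rank_eq_card_iff_linearIndependent_col M
    _ ↔ LinearIndependent S (M.map (algebraMap R S)).col :=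
        linearIndependent_algebraMap_comp_iff.symm
    _ ↔ ∀ v : n → S, M.map (algebraMap R S) *ᵥ v = 0 → v = 0 := by
        rw [← mulVec_injective_iff, ← ker_mulVecLin_eq_bot_iff, LinearMap.ker_eq_bot,
          coe_mulVecLin]

section Kalman

variable {m n R : Type*} [Fintype n] [DecidableEq n]

/-- The stacked matrix `[L; LA; …; LAᵏ⁻¹]` of the Kalman rank condition (R). The row index `(i, r)`
stands for row `r` of the block `L * A ^ i`. -/
def kalmanMatrix [Semiring R] (L : Matrix m n R) (A : Matrix n n R) (k : ℕ) :
    Matrix (Fin k × m) n R :=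
  of fun p j => (L * A ^ (p.1 : ℕ)) p.2 j

theorem map_kalmanMatrix_mulVec_eq_zero_iff [Semiring R] {S : Type*}
    [NonUnitalNonAssocSemiring S] (f : R → S) (L : Matrix m n R) (A : Matrix n n R)
    (k : ℕ) (v : n → S) :
    (kalmanMatrix L A k).map f *ᵥ v = 0 ↔ ∀ i < k, (L * A ^ i).map f *ᵥ v = 0 :=
  ⟨fun h i hi => funext fun r => congrFun h (⟨i, hi⟩, r),
    fun h => funext fun p => congrFun (h p.1 p.1.isLt) p.2⟩

theorem rank_kalmanMatrix_eq_card_iff [Finite m] [CommRing R] (S : Type*) [CommRing S]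
    [IsDomain S] [Algebra R S] [FaithfulSMul R S] (L : Matrix m n R) (A : Matrix n n R) (k : ℕ) :
    (kalmanMatrix L A k).rank = Fintype.card n ↔
      ∀ v : n → S, (∀ i < k, (L * A ^ i).map (algebraMap R S) *ᵥ v = 0) → v = 0 := by
  simp only [rank_eq_card_iff_forall_map_mulVec_eq_zero S, map_kalmanMatrix_mulVec_eq_zero_iff]

end Kalman

theorem cmap_mul_mulVec {l m n : ℕ} (X : Matrix (Fin l) (Fin m) ℝ) (Y : Matrix (Fin m) (Fin n) ℝ)
    (v : Fin n → ℂ) : cmap (X * Y) *ᵥ v = cmap X *ᵥ (cmap Y *ᵥ v) := by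
  rw [mulVec_mulVec]
  exact congrArg (· *ᵥ v) (Matrix.map_mul (f := Complex.ofRealHom))

theorem cmap_TimA_mulVec (a : ℝ) (φ : Fin 4 → ℂ) :
    cmap (TimA a) *ᵥ φ = ![-φ 1, -φ 0, -(a * φ 3), -(a * φ 2)] := by
  ext i
  fin_cases i <;> simp [cmap, TimA, mulVec, dotProduct, Fin.sum_univ_four]

theorem cmap_TimL_mulVec (γ : ℝ) (φ : Fin 4 → ℂ) :
    cmap (TimL γ) *ᵥ φ = ![φ 3, 0, 0, -φ 0 + γ * φ 3] := by
  ext i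
  fin_cases i <;> simp [cmap, TimL, mulVec, dotProduct, Fin.sum_univ_four]

theorem cmap_TimL_mulVec_eq_zero_iff (γ : ℝ) (φ : Fin 4 → ℂ) :
    cmap (TimL γ) *ᵥ φ = 0 ↔ φ 0 = 0 ∧ φ 3 = 0 := by
  rw [cmap_TimL_mulVec]
  constructor
  · intro h
    have h₃ : φ 3 = 0 := congrFun h 0
    have h₀ : -φ 0 + γ * φ 3 = 0 := congrFun h 3
    exact ⟨by simpa [h₃] using h₀, h₃⟩
  · rintro ⟨h₀, h₃⟩
    simp [h₀, h₃]

theorem cmap_TimL_mul_TimA_mulVec_eq_zero_iff {a : ℝ} (ha : a ≠ 0) (γ : ℝ) (φ : Fin 4 → ℂ) :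
    cmap (TimL γ * TimA a) *ᵥ φ = 0 ↔ φ 1 = 0 ∧ φ 2 = 0 := by
  rw [cmap_mul_mulVec, cmap_TimL_mulVec_eq_zero_iff, cmap_TimA_mulVec]
  simp [ha]

theorem timoshenko_rank_condition_general {a : ℝ} (ha : a ≠ 0) (γ : ℝ) :
    (∀ φ : Fin 4 → ℂ,
      cmap (TimL γ) *ᵥ φ = 0 → cmap (TimL γ * TimA a) *ᵥ φ = 0 → φ = 0) ∧
    ∀ k ≥ 2, (kalmanMatrix (TimL γ) (TimA a) k).rank = 4 := by
  have trivial_kernel (φ : Fin 4 → ℂ) (hL : cmap (TimL γ) *ᵥ φ = 0)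
      (hLA : cmap (TimL γ * TimA a) *ᵥ φ = 0) : φ = 0 := by
    obtain ⟨h₀, h₃⟩ := (cmap_TimL_mulVec_eq_zero_iff γ φ).1 hL
    obtain ⟨h₁, h₂⟩ := (cmap_TimL_mul_TimA_mulVec_eq_zero_iff ha γ φ).1 hLA
    ext i
    fin_cases i <;> assumption
  refine ⟨trivial_kernel, fun k hk => (rank_kalmanMatrix_eq_card_iff ℂ _ _ k).2 fun φ hφ => ?_⟩
  have hL : cmap (TimL γ * TimA a ^ 0) *ᵥ φ = 0 := hφ 0 (by lia)
  have hLA : cmap (TimL γ * TimA a ^ 1) *ᵥ φ = 0 := hφ 1 (by lia)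
  rw [pow_zero, mul_one] at hL
  rw [pow_one] at hLA
  exact trivial_kernel φ hL hLA

/-- **The Timoshenko system satisfies the Kalman rank condition (R).**
If `Lφ = LAφ = LA²φ = LA³φ = 0` then `φ = 0`; equivalently the stacked matrix
`[L; LA; LA²; LA³]` has rank 4. -/
theorem timoshenko_rank_condition
    (a γ : ℝ) (ha : 0 < a) (hγ : 0 < γ) :
    (∀ φ : Fin 4 → ℂ,
      (cmap (TimL γ)).mulVec φ = 0 →
      (cmap (TimL γ * TimA a)).mulVec φ = 0 →
      (cmap (TimL γ * TimA a ^ 2)).mulVec φ = 0 →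
      (cmap (TimL γ * TimA a ^ 3)).mulVec φ = 0 →
      φ = 0) ∧
    Matrix.rank (Matrix.of fun p : Fin 4 × Fin 4 => fun j : Fin 4 =>
      (TimL γ * TimA a ^ (p.1 : ℕ)) p.2 j) = 4 := by
  obtain ⟨trivial_kernel, full_rank⟩ := timoshenko_rank_condition_general ha.ne' γ
  exact ⟨fun φ hL hLA _ _ => trivial_kernel φ hL hLA, full_rank 4 (by norm_num)⟩
end
end
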